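/- Let n ∈ ℕ, n ≥ 2, and c ∈ ℝ. The operator (Δ² + c|x|⁻⁴) with domain C₀^∞(ℝⁿ∖{0}) is essentially self-adjoint in L²(ℝⁿ; dⁿx) if and only if for every ℓ ∈ ℕ₀ the operator τ_{2,n,ℓ}(c) with domain C₀^∞((0,∞)) is essentially self-adjoint in L²((0,∞); dr). -/

import Mathlib

open MeasureTheory

noncomputable section

/-- A densely defined operator `T` in a complex Hilbert space is *essentially self-adjoint*
if its adjoint `T*` is self-adjoint (equivalently, its closure is self-adjoint). -/
def EssentiallySelfAdjoint {H : Type*} [NormedAddCommGroup H] [InnerProductSpace ℂ H]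
    [CompleteSpace H] (T : H →ₗ.[ℂ] H) : Prop :=
  Dense (T.domain : Set H) ∧ IsSelfAdjoint T.adjoint

/-- The Laplacian of `f : ℝⁿ → ℂ`. -/
def laplacian {n : ℕ} (f : EuclideanSpace ℝ (Fin n) → ℂ) (x : EuclideanSpace ℝ (Fin n)) : ℂ :=
  ∑ i : Fin n, fderiv ℝ (fun y => fderiv ℝ f y (EuclideanSpace.single i (1:ℝ))) x
    (EuclideanSpace.single i (1:ℝ))

/-- The graph of the operator given by the formal differential expression `L` with domain
`C₀^∞(ℝⁿ \ {0})`, as a subspace of `L²(ℝⁿ) × L²(ℝⁿ)`. -/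
def graphOf (n : ℕ) (L : (EuclideanSpace ℝ (Fin n) → ℂ) → (EuclideanSpace ℝ (Fin n) → ℂ)) :
    Submodule ℂ (Lp ℂ 2 (volume : Measure (EuclideanSpace ℝ (Fin n))) ×
      Lp ℂ 2 (volume : Measure (EuclideanSpace ℝ (Fin n)))) :=
  Submodule.span ℂ {p | ∃ φ : EuclideanSpace ℝ (Fin n) → ℂ,
    ContDiff ℝ (⊤ : ℕ∞) φ ∧ HasCompactSupport φ ∧ (0 : EuclideanSpace ℝ (Fin n)) ∉ tsupport φ ∧
    (p.1 : EuclideanSpace ℝ (Fin n) → ℂ) =ᵐ[volume] φ ∧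
    (p.2 : EuclideanSpace ℝ (Fin n) → ℂ) =ᵐ[volume] L φ}

/-- The operator in `L²(ℝⁿ)` given by the formal differential expression `L` with domain
`C₀^∞(ℝⁿ \ {0})`. -/
def opOn (n : ℕ) (L : (EuclideanSpace ℝ (Fin n) → ℂ) → (EuclideanSpace ℝ (Fin n) → ℂ)) :
    Lp ℂ 2 (volume : Measure (EuclideanSpace ℝ (Fin n))) →ₗ.[ℂ]
      Lp ℂ 2 (volume : Measure (EuclideanSpace ℝ (Fin n))) :=
  (graphOf n L).toLinearPMap

/-- The operator `Δ² + c|x|⁻⁴` with domain `C₀^∞(ℝⁿ \ {0})` in `L²(ℝⁿ)`. -/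
def T2op (n : ℕ) (c : ℝ) :
    Lp ℂ 2 (volume : Measure (EuclideanSpace ℝ (Fin n))) →ₗ.[ℂ]
      Lp ℂ 2 (volume : Measure (EuclideanSpace ℝ (Fin n))) :=
  opOn n (fun φ x => laplacian (laplacian φ) x + ((c * (‖x‖ ^ 4)⁻¹ : ℝ) : ℂ) * φ x)
/-- Lebesgue measure on `(0,∞)`. -/
def lebIoi : Measure ℝ := volume.restrict (Set.Ioi 0)

/-- The graph of the operator given by a formal differential expression `L` with domain
`C₀^∞((0,∞))`, as a subspace of `L²((0,∞); dr) × L²((0,∞); dr)`. -/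
def graphOnHalfLine (L : (ℝ → ℂ) → (ℝ → ℂ)) : Submodule ℂ (Lp ℂ 2 lebIoi × Lp ℂ 2 lebIoi) :=
  Submodule.span ℂ {p | ∃ φ : ℝ → ℂ, ContDiff ℝ (⊤ : ℕ∞) φ ∧ HasCompactSupport φ ∧
    tsupport φ ⊆ Set.Ioi 0 ∧
    (p.1 : ℝ → ℂ) =ᵐ[lebIoi] φ ∧ (p.2 : ℝ → ℂ) =ᵐ[lebIoi] L φ}

/-- The operator in `L²((0,∞); dr)` given by a formal differential expression `L`
with domain `C₀^∞((0,∞))`. -/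
def opOnHalfLine (L : (ℝ → ℂ) → (ℝ → ℂ)) : Lp ℂ 2 lebIoi →ₗ.[ℂ] Lp ℂ 2 lebIoi :=
  (graphOnHalfLine L).toLinearPMap


/-- The differential expression `d²/dr² - (n+2ℓ-1)(n+2ℓ-3)/(4r²)`. -/
def bExp (n ℓ : ℕ) (φ : ℝ → ℂ) : ℝ → ℂ := fun r =>
  deriv (deriv φ) r
    - (((((n : ℝ) + 2 * ℓ - 1) * ((n : ℝ) + 2 * ℓ - 3)) / (4 * r ^ 2) : ℝ) : ℂ) * φ r

/-- The differential expression `τ_{2,n,ℓ}(c) = [d²/dr² - (n+2ℓ-1)(n+2ℓ-3)/(4r²)]² + c/r⁴`. -/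
def tau2nlExp (n ℓ : ℕ) (c : ℝ) (φ : ℝ → ℂ) : ℝ → ℂ := fun r =>
  bExp n ℓ (bExp n ℓ φ) r + ((c / r ^ 4 : ℝ) : ℂ) * φ r

/-- The operator `τ_{2,n,ℓ}(c)|_{C₀^∞((0,∞))}` in `L²((0,∞); dr)`. -/
def tau2nlOp (n ℓ : ℕ) (c : ℝ) : Lp ℂ 2 lebIoi →ₗ.[ℂ] Lp ℂ 2 lebIoi :=
  opOnHalfLine (tau2nlExp n ℓ c)

open scoped ContDiff ComplexConjugate

/-!
The proof is separation of variables. A nonzero solid harmonic `P` of degree `d` gives a nonzero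
multiple of an isometry `W_P : L²((0,∞); dr) → L²(ℝⁿ)`, `f ↦ r ^ (-(n - 1) / 2) f(r) P(ω)`, which
intertwines `τ_{2,n,d}(c)` with `Δ² + c|x|⁻⁴`. Its adjoint takes a radial coefficient, preserves
test functions, and intertwines the two operators in the other direction. By von Neumann's
criterion, essential self-adjointness means that the deficiency spaces `ker (T* - z)`, `z ∉ ℝ`,
vanish. The adjoint of an intertwiner maps deficiency vectors to deficiency vectors, so essential
self-adjointness passes from `Δ² + c|x|⁻⁴` to each `τ_{2,n,d}(c)` because `W_P` is injective, and
back because no nonzero vector is annihilated by all the adjoints of the `W_P`: homogeneous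
functions separate points, hence are dense on compact sets by Stone-Weierstrass, and each is a
combination of functions `|x| ^ (2 * j) * P(x)` with `P` a solid harmonic, by induction on the
degree.
-/

/-! ### Symmetric operators and deficiency spaces -/

section DeficiencySpaces

open Submodule

variable {H K : Type*} [NormedAddCommGroup H] [InnerProductSpace ℂ H]
  [NormedAddCommGroup K] [InnerProductSpace ℂ K] {G : Submodule ℂ (H × H)}
  {G' : Submodule ℂ (K × K)}

/-- The graph of a densely defined symmetric operator, where symmetry says that the operator is
contained in its adjoint. -/
structure IsSymmetricGraph (G : Submodule ℂ (H × H)) : Prop where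
  dense_domain : Dense (G.map (LinearMap.fst ℂ H H) : Set H)
  le_adjoint : G ≤ G.adjoint

/-- The deficiency space `ker (T* - z)` of the operator `T` with graph `G`. -/
def deficiencySpace (G : Submodule ℂ (H × H)) (z : ℂ) : Submodule ℂ H :=
  G.adjoint.comap (LinearMap.id.prod (z • LinearMap.id))

/-- The bounded operator `W` intertwines the operators `T` and `T'` with graphs `G` and `G'`:
`W T ⊆ T' W`. -/
def Intertwines (W : H →L[ℂ] K) (G : Submodule ℂ (H × H)) (G' : Submodule ℂ (K × K)) : Prop :=
  ∀ p ∈ G, (W p.1, W p.2) ∈ G'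

lemma mem_adjoint_iff_inner_eq {q : H × H} :
    q ∈ G.adjoint ↔ ∀ p ∈ G, inner ℂ p.2 q.1 = inner ℂ p.1 q.2 := by
  simp only [mem_adjoint_iff, sub_eq_zero, Prod.forall]

lemma mem_deficiencySpace {z : ℂ} {y : H} : y ∈ deficiencySpace G z ↔ (y, z • y) ∈ G.adjoint :=
  Iff.rfl

lemma adjoint_topologicalClosure : G.topologicalClosure.adjoint = G.adjoint := by
  refine le_antisymm (fun q hq => ?_) fun q hq => ?_ <;> rw [mem_adjoint_iff_inner_eq] at hq ⊢
  · exact fun p hp => hq p (G.le_topologicalClosure hp)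
  · have hclosed : IsClosed {p : H × H | inner ℂ p.2 q.1 = inner ℂ p.1 q.2} :=
      isClosed_eq (by fun_prop) (by fun_prop)
    exact fun p hp => closure_minimal hq hclosed hp

lemma isClosed_adjoint : IsClosed (G.adjoint : Set (H × H)) := by
  have h : (G.adjoint : Set (H × H)) =
      ⋂ p ∈ G, {q : H × H | inner ℂ p.2 q.1 = inner ℂ p.1 q.2} := by
    ext q
    simp only [SetLike.mem_coe, mem_adjoint_iff_inner_eq, Set.mem_iInter, Set.mem_ofPred_eq]
  rw [h]
  exact isClosed_biInter fun p _ => isClosed_eq (by fun_prop) (by fun_prop)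

lemma snd_eq_of_mem_adjoint (hG : Dense (G.map (LinearMap.fst ℂ H H) : Set H)) {p q : H × H}
    (hp : p ∈ G.adjoint) (hq : q ∈ G.adjoint) (h : p.1 = q.1) : p.2 = q.2 := by
  refine hG.eq_of_inner_right ℂ ?_
  rintro _ ⟨r, hr, rfl⟩
  rw [LinearMap.fst_apply, ← mem_adjoint_iff_inner_eq.1 hp r hr,
    ← mem_adjoint_iff_inner_eq.1 hq r hr, h]

lemma deficiencySpace_eq_bot_of_adjoint_adjoint (h : G.adjoint.adjoint = G.adjoint) {z : ℂ}
    (hz : z.im ≠ 0) : deficiencySpace G z = ⊥ := by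
  refine (Submodule.eq_bot_iff _).2 fun y hy => ?_
  rw [mem_deficiencySpace] at hy
  have hself : inner ℂ (z • y) y = inner ℂ y (z • y) := mem_adjoint_iff_inner_eq.1 (h ▸ hy) _ hy
  rw [inner_smul_left, inner_smul_right, mul_eq_mul_right_iff, Complex.conj_eq_iff_im] at hself
  exact inner_self_eq_zero.1 (hself.resolve_left hz)

namespace IsSymmetricGraph

lemma topologicalClosure_le_adjoint (hG : IsSymmetricGraph G) : G.topologicalClosure ≤ G.adjoint :=
  G.topologicalClosure_minimal hG.le_adjoint isClosed_adjoint

lemma inner_snd_fst (hG : IsSymmetricGraph G) {p q : H × H} (hp : p ∈ G.topologicalClosure)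
    (hq : q ∈ G.topologicalClosure) : inner ℂ p.2 q.1 = inner ℂ p.1 q.2 := by
  have h := hG.topologicalClosure_le_adjoint hq
  rw [← adjoint_topologicalClosure] at h
  exact mem_adjoint_iff_inner_eq.1 h p hp

lemma norm_sq_snd_sub_I_smul_fst (hG : IsSymmetricGraph G) {p : H × H}
    (hp : p ∈ G.topologicalClosure) :
    ‖p.2 - Complex.I • p.1‖ ^ 2 = ‖p.2‖ ^ 2 + ‖p.1‖ ^ 2 := by
  have him : (inner ℂ p.2 p.1 : ℂ).im = 0 := by
    rw [← Complex.conj_eq_iff_im, inner_conj_symm, hG.inner_snd_fst hp hp]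
  rw [@norm_sub_sq ℂ, inner_smul_right, norm_smul]
  simp [him]

lemma of_intertwines {W : K →L[ℂ] H} {C : ℂ} (hC : C ≠ 0)
    (hW : ∀ x y, inner ℂ (W x) (W y) = C * inner ℂ x y) (hG : IsSymmetricGraph G)
    (hdense : Dense (G'.map (LinearMap.fst ℂ K K) : Set K)) (hGG' : Intertwines W G' G) :
    IsSymmetricGraph G' where
  dense_domain := hdense
  le_adjoint q hq := mem_adjoint_iff_inner_eq.2 fun p hp => mul_left_cancel₀ hC <| by
    rw [← hW, ← hW]
    exact mem_adjoint_iff_inner_eq.1 (hG.le_adjoint (hGG' q hq)) _ (hGG' p hp)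

variable [CompleteSpace H]

lemma essentiallySelfAdjoint_iff_adjoint_adjoint (hG : IsSymmetricGraph G) :
    EssentiallySelfAdjoint G.toLinearPMap ↔ G.adjoint.adjoint = G.adjoint := by
  set T := G.toLinearPMap
  have hdom : Dense (T.domain : Set H) := hG.dense_domain
  have hgraph : T.graph = G := toLinearPMap_graph_eq G fun p hp h0 =>
    snd_eq_of_mem_adjoint hG.dense_domain (hG.le_adjoint hp) (zero_mem _) h0
  have hadj : T.adjoint.graph = G.adjoint := by
    rw [LinearPMap.adjoint_graph_eq_graph_adjoint hdom, hgraph]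
  have hle : T ≤ T.adjoint := by
    rw [← LinearPMap.le_graph_iff, hgraph, hadj]
    exact hG.le_adjoint
  have hadj2 : T.adjoint.adjoint.graph = G.adjoint.adjoint := by
    rw [LinearPMap.adjoint_graph_eq_graph_adjoint (hdom.mono hle.1), hadj]
  rw [EssentiallySelfAdjoint, LinearPMap.isSelfAdjoint_def, and_iff_right hdom, ← hadj2, ← hadj]
  exact ⟨congrArg _, LinearPMap.eq_of_eq_graph⟩

lemma exists_mem_topologicalClosure_snd_sub_eq (hG : IsSymmetricGraph G)
    (hdef : deficiencySpace G (-Complex.I) = ⊥) (y : H) :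
    ∃ p ∈ G.topologicalClosure, p.2 - Complex.I • p.1 = y := by
  let S : G.topologicalClosure →L[ℂ] H :=
    (ContinuousLinearMap.snd ℂ H H - Complex.I • ContinuousLinearMap.fst ℂ H H).comp
      G.topologicalClosure.subtypeL
  have hclosed : IsClosed (S.range : Set H) := by
    refine (S.antilipschitz_of_bound (K := 1) fun p => ?_).isClosed_range S.uniformContinuous
    have hp : ‖S p‖ ^ 2 = ‖p.1.2‖ ^ 2 + ‖p.1.1‖ ^ 2 := hG.norm_sq_snd_sub_I_smul_fst p.2
    rw [NNReal.coe_one, one_mul, coe_norm]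
    exact max_le (abs_le_of_sq_le_sq' (by nlinarith) (norm_nonneg _)).2
      (abs_le_of_sq_le_sq' (by nlinarith) (norm_nonneg _)).2
  have hbot : S.rangeᗮ = ⊥ := by
    rw [eq_bot_iff, ← hdef]
    refine fun x hx => mem_deficiencySpace.2 <| mem_adjoint_iff_inner_eq.2 fun p hp => ?_
    have h0 : inner ℂ (p.2 - Complex.I • p.1) x = 0 :=
      (mem_orthogonal _ _).1 hx _ ⟨⟨p, G.le_topologicalClosure hp⟩, rfl⟩
    rw [inner_sub_left, inner_smul_left, sub_eq_zero] at h0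
    rw [h0, inner_smul_right, Complex.conj_I]
  have htop : S.range = ⊤ := by
    rw [← hclosed.submodule_topologicalClosure_eq, topologicalClosure_eq_top_iff, hbot]
  obtain ⟨p, hp⟩ := LinearMap.range_eq_top.1 htop y
  exact ⟨p, p.2, hp⟩

theorem essentiallySelfAdjoint_iff_deficiencySpace (hG : IsSymmetricGraph G) :
    EssentiallySelfAdjoint G.toLinearPMap ↔ ∀ z : ℂ, z.im ≠ 0 → deficiencySpace G z = ⊥ := by
  rw [hG.essentiallySelfAdjoint_iff_adjoint_adjoint]
  refine ⟨fun h z hz => deficiencySpace_eq_bot_of_adjoint_adjoint h hz, fun h => ?_⟩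
  have hle : G.adjoint ≤ G.topologicalClosure := fun q hq => by
    obtain ⟨p, hp, hpq⟩ := hG.exists_mem_topologicalClosure_snd_sub_eq
      (h (-Complex.I) (by simp)) (q.2 - Complex.I • q.1)
    have hsub : q - p ∈ G.adjoint := sub_mem hq (hG.topologicalClosure_le_adjoint hp)
    have hsnd : (q - p).2 = Complex.I • (q - p).1 := by
      rw [Prod.fst_sub, Prod.snd_sub, smul_sub, sub_eq_sub_iff_sub_eq_sub, hpq]
    have hfst : (q - p).1 ∈ deficiencySpace G Complex.I := by
      rwa [mem_deficiencySpace, ← hsnd]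
    rw [h Complex.I (by simp), mem_bot] at hfst
    have hzero : q - p = 0 := Prod.ext hfst (by rw [hsnd, hfst, smul_zero]; rfl)
    rwa [sub_eq_zero.1 hzero]
  have hclosure := hle.antisymm hG.topologicalClosure_le_adjoint
  nth_rewrite 1 [hclosure]
  exact adjoint_topologicalClosure

end IsSymmetricGraph

namespace Intertwines

variable [CompleteSpace H] [CompleteSpace K]

lemma adjoint {W : H →L[ℂ] K} (hW : Intertwines W G G') :
    Intertwines W.adjoint G'.adjoint G.adjoint := fun q hq =>
  mem_adjoint_iff_inner_eq.2 fun p hp => by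
    rw [ContinuousLinearMap.adjoint_inner_right, ContinuousLinearMap.adjoint_inner_right]
    exact mem_adjoint_iff_inner_eq.1 hq _ (hW p hp)

lemma adjoint_mem_deficiencySpace {W : H →L[ℂ] K} (hW : Intertwines W G G') {z : ℂ} {y : K}
    (hy : y ∈ deficiencySpace G' z) : W.adjoint y ∈ deficiencySpace G z := by
  have h : (W.adjoint y, W.adjoint (z • y)) ∈ G.adjoint := hW.adjoint (y, z • y) hy
  rwa [map_smul] at h

lemma adjoint_of_mem_domain {W : K →L[ℂ] H} (hW : Intertwines W G' G) (hG : IsSymmetricGraph G)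
    (hG' : IsSymmetricGraph G')
    (hdom : ∀ p ∈ G, W.adjoint p.1 ∈ G'.map (LinearMap.fst ℂ K K)) :
    Intertwines W.adjoint G G' := fun p hp => by
  obtain ⟨q, hq, hqp : q.1 = W.adjoint p.1⟩ := hdom p hp
  have hsnd : q.2 = W.adjoint p.2 := snd_eq_of_mem_adjoint hG'.dense_domain
    (hG'.le_adjoint hq) (hW.adjoint p (hG.le_adjoint hp)) hqp
  rwa [← hqp, ← hsnd]

end Intertwines

/-- A nonzero deficiency vector of `G` is mapped by some `(W i).adjoint` to a nonzero deficiency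
vector of `G' i`. -/
theorem IsSymmetricGraph.essentiallySelfAdjoint_of_intertwines [CompleteSpace H] {ι : Type*}
    {K : ι → Type*} [∀ i, NormedAddCommGroup (K i)] [∀ i, InnerProductSpace ℂ (K i)]
    [∀ i, CompleteSpace (K i)] {G' : ∀ i, Submodule ℂ (K i × K i)} (W : ∀ i, K i →L[ℂ] H)
    (hG : IsSymmetricGraph G) (hG' : ∀ i, IsSymmetricGraph (G' i))
    (hW : ∀ i, Intertwines (W i) (G' i) G)
    (htotal : ∀ y, (∀ i, (W i).adjoint y = 0) → y = 0)
    (hess : ∀ i, EssentiallySelfAdjoint (G' i).toLinearPMap) :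
    EssentiallySelfAdjoint G.toLinearPMap := by
  refine hG.essentiallySelfAdjoint_iff_deficiencySpace.2 fun z hz =>
    (Submodule.eq_bot_iff _).2 fun y hy => htotal y fun i => ?_
  have hmem := (hW i).adjoint_mem_deficiencySpace hy
  rwa [(hG' i).essentiallySelfAdjoint_iff_deficiencySpace.1 (hess i) z hz, mem_bot] at hmem

end DeficiencySpaces

/-! ### Test functions -/

lemma intertwines_span {H K : Type*} [NormedAddCommGroup H] [InnerProductSpace ℂ H]
    [NormedAddCommGroup K] [InnerProductSpace ℂ K] {S : Set (H × H)} {G' : Submodule ℂ (K × K)}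
    {W : H →L[ℂ] K} (h : ∀ p ∈ S, (W p.1, W p.2) ∈ G') :
    Intertwines W (Submodule.span ℂ S) G' :=
  Submodule.span_le (p := G'.comap ((W : H →ₗ[ℂ] K).prodMap (W : H →ₗ[ℂ] K))).2 h

lemma inner_eq_integral_of_ae_eq {X : Type*} [MeasurableSpace X] {μ : Measure X}
    {f g : Lp ℂ 2 μ} {φ ψ : X → ℂ} (hf : f =ᵐ[μ] φ) (hg : g =ᵐ[μ] ψ) :
    inner ℂ f g = ∫ x, conj (φ x) * ψ x ∂μ := by
  rw [L2.inner_def]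
  refine integral_congr_ae ?_
  filter_upwards [hf, hg] with x h1 h2
  rw [h1, h2, RCLike.inner_apply, mul_comm]

section TestFunctions

variable {X : Type*} [NormedAddCommGroup X] [NormedSpace ℝ X]

/-- The space `C₀^∞(Ω)` of smooth complex-valued functions with compact support in `Ω`. -/
structure IsTest (Ω : Set X) (φ : X → ℂ) : Prop where
  contDiff : ContDiff ℝ ∞ φ
  hasCompactSupport : HasCompactSupport φ
  tsupport_subset : tsupport φ ⊆ Ω

lemma contDiff_of_tsupport {F : Type*} [NormedAddCommGroup F] [NormedSpace ℝ F] {f : X → F}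
    (h : ∀ x ∈ tsupport f, ContDiffAt ℝ ∞ f x) : ContDiff ℝ ∞ f := by
  rw [contDiff_iff_contDiffAt]
  intro x
  by_cases hx : x ∈ tsupport f
  · exact h x hx
  · exact contDiffAt_const.congr_of_eventuallyEq (notMem_tsupport_iff_eventuallyEq.1 hx)

namespace IsTest

variable {Ω : Set X} {φ ψ : X → ℂ}

lemma mul_of_contDiffAt {g : X → ℂ} (hg : ∀ x ∈ Ω, ContDiffAt ℝ ∞ g x) (hφ : IsTest Ω φ) :
    IsTest Ω (fun x => g x * φ x) where
  contDiff := contDiff_of_tsupport fun x hx =>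
    (hg x (hφ.tsupport_subset (tsupport_mul_subset_right hx))).mul hφ.contDiff.contDiffAt
  hasCompactSupport := hφ.hasCompactSupport.mul_left
  tsupport_subset := tsupport_mul_subset_right.trans hφ.tsupport_subset

lemma add (hφ : IsTest Ω φ) (hψ : IsTest Ω ψ) : IsTest Ω (fun x => φ x + ψ x) where
  contDiff := hφ.contDiff.add hψ.contDiff
  hasCompactSupport := hφ.hasCompactSupport.add hψ.hasCompactSupport
  tsupport_subset := (tsupport_add φ ψ).trans
    (Set.union_subset hφ.tsupport_subset hψ.tsupport_subset)

lemma zero : IsTest Ω (fun _ => 0) where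
  contDiff := contDiff_const
  hasCompactSupport := HasCompactSupport.zero
  tsupport_subset := by simp [tsupport]

lemma sum {ι : Type*} (s : Finset ι) {f : ι → X → ℂ} (h : ∀ i ∈ s, IsTest Ω (f i)) :
    IsTest Ω (fun x => ∑ i ∈ s, f i x) := by
  classical
  induction s using Finset.induction_on with
  | empty => simpa using zero
  | insert i s hi ih =>
    simp only [Finset.sum_insert hi]
    exact (h i (by simp)).add (ih fun j hj => h j (by simp [hj]))

lemma star_comp (hφ : IsTest Ω φ) : IsTest Ω (fun x => conj (φ x)) where
  contDiff := Complex.conjCLE.contDiff.comp hφ.contDiff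
  hasCompactSupport := hφ.hasCompactSupport.comp_left (map_zero _)
  tsupport_subset := (tsupport_comp_subset (map_zero conj) φ).trans hφ.tsupport_subset

lemma fderiv_apply (hφ : IsTest Ω φ) (v : X) : IsTest Ω (fun x => fderiv ℝ φ x v) where
  contDiff := (hφ.contDiff.fderiv_right (m := ∞) (by simp)).clm_apply contDiff_const
  hasCompactSupport := hφ.hasCompactSupport.fderiv_apply ℝ v
  tsupport_subset := (tsupport_fderiv_apply_subset ℝ v).trans hφ.tsupport_subset

lemma memLp [MeasurableSpace X] [OpensMeasurableSpace X] (hφ : IsTest Ω φ) (μ : Measure X)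
    [IsFiniteMeasureOnCompacts μ] : MemLp φ 2 μ :=
  hφ.contDiff.continuous.memLp_of_hasCompactSupport hφ.hasCompactSupport

lemma integrable [MeasurableSpace X] [OpensMeasurableSpace X] (hφ : IsTest Ω φ) (μ : Measure X)
    [IsFiniteMeasureOnCompacts μ] : Integrable φ μ :=
  hφ.contDiff.continuous.integrable_of_hasCompactSupport hφ.hasCompactSupport

lemma mul (hφ : IsTest Ω φ) (hψ : IsTest Ω ψ) : IsTest Ω (fun x => φ x * ψ x) :=
  mul_of_contDiffAt (fun _ _ => hφ.contDiff.contDiffAt) hψ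

lemma of_support_subset {C : Set X} (hC : IsCompact C) (hCΩ : C ⊆ Ω)
    (hsupp : Function.support φ ⊆ C) (hφ : ∀ x ∈ Ω, ContDiffAt ℝ ∞ φ x) : IsTest Ω φ :=
  have hts : tsupport φ ⊆ C := closure_minimal hsupp hC.isClosed
  ⟨contDiff_of_tsupport fun x hx => hφ x (hCΩ (hts hx)),
    hC.of_isClosed_subset (isClosed_tsupport _) hts, hts.trans hCΩ⟩

lemma apply_eq_zero (hφ : IsTest Ω φ) {x : X} (hx : x ∉ Ω) : φ x = 0 :=
  image_eq_zero_of_notMem_tsupport fun h => hx (hφ.tsupport_subset h)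

end IsTest

lemma Lp_eq_zero_of_forall_isTest [MeasurableSpace X] [BorelSpace X] [FiniteDimensional ℝ X]
    {μ : Measure X} [IsFiniteMeasureOnCompacts μ] {Ω : Set X} (hΩ : IsOpen Ω)
    (hae : ∀ᵐ x ∂μ, x ∈ Ω) (y : Lp ℂ 2 μ)
    (h : ∀ φ, IsTest Ω φ → ∫ x, conj (y x) * φ x ∂μ = 0) : y = 0 := by
  have hloc : LocallyIntegrable (fun x => conj (y x)) μ :=
    (Lp.memLp y).star.locallyIntegrable (by norm_num)
  have h0 := hΩ.ae_eq_zero_of_integral_contDiff_smul_eq_zero (hloc.locallyIntegrableOn Ω)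
    fun g hg hgc hgs => by
      have ht : IsTest Ω (fun x => (g x : ℂ)) :=
        ⟨Complex.ofRealCLM.contDiff.comp hg, hgc.comp_left Complex.ofReal_zero,
          (tsupport_comp_subset Complex.ofReal_zero g).trans hgs⟩
      simpa only [Complex.real_smul, mul_comm] using h _ ht
  refine Lp.eq_zero_iff_ae_eq_zero.2 ?_
  filter_upwards [h0, hae] with x h1 h2
  simpa using h1 h2

/-- The graph in `L²(μ)` of the differential expression `L` with domain `C₀^∞(Ω)`. -/
def testGraph [MeasurableSpace X] (μ : Measure X) (Ω : Set X) (L : (X → ℂ) → X → ℂ) :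
    Submodule ℂ (Lp ℂ 2 μ × Lp ℂ 2 μ) :=
  Submodule.span ℂ {p | ∃ φ, IsTest Ω φ ∧ p.1 =ᵐ[μ] φ ∧ p.2 =ᵐ[μ] L φ}

lemma mem_of_mem_testGraph [MeasurableSpace X] {μ : Measure X} {L : (X → ℂ) → X → ℂ}
    {V : Type*} [AddCommGroup V] [Module ℂ V] (W : Lp ℂ 2 μ →ₗ[ℂ] V) (M : Submodule ℂ V)
    (h : ∀ f : Lp ℂ 2 μ, ∀ φ, IsTest Ω φ → f =ᵐ[μ] φ → W f ∈ M)
    {p : Lp ℂ 2 μ × Lp ℂ 2 μ} (hp : p ∈ testGraph μ Ω L) : W p.1 ∈ M := by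
  have hle : testGraph μ Ω L ≤ M.comap (W ∘ₗ LinearMap.fst ℂ _ _) :=
    Submodule.span_le.2 fun q ⟨φ, hφ, hqφ, _⟩ => h q.1 φ hφ hqφ
  exact hle hp

section testGraph

variable [MeasurableSpace X] [BorelSpace X] {μ : Measure X} [IsFiniteMeasureOnCompacts μ]
  {L : (X → ℂ) → X → ℂ}

lemma mem_map_fst_testGraph (hL : ∀ φ, IsTest Ω φ → IsTest Ω (L φ)) (hφ : IsTest Ω φ)
    {f : Lp ℂ 2 μ} (hf : f =ᵐ[μ] φ) :
    f ∈ (testGraph μ Ω L).map (LinearMap.fst ℂ (Lp ℂ 2 μ) (Lp ℂ 2 μ)) :=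
  have hLφ := (hL φ hφ).memLp μ
  ⟨(f, hLφ.toLp), Submodule.subset_span ⟨φ, hφ, hf, hLφ.coeFn_toLp⟩, rfl⟩

variable [FiniteDimensional ℝ X]

lemma dense_map_fst_testGraph (hΩ : IsOpen Ω) (hae : ∀ᵐ x ∂μ, x ∈ Ω)
    (hL : ∀ φ, IsTest Ω φ → IsTest Ω (L φ)) :
    Dense ((testGraph μ Ω L).map (LinearMap.fst ℂ (Lp ℂ 2 μ) (Lp ℂ 2 μ)) : Set (Lp ℂ 2 μ)) := by
  rw [Submodule.dense_iff_topologicalClosure_eq_top, Submodule.topologicalClosure_eq_top_iff,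
    Submodule.eq_bot_iff]
  refine fun y hy => Lp_eq_zero_of_forall_isTest hΩ hae y fun φ hφ => ?_
  have hφL := (hφ.memLp μ).coeFn_toLp
  rw [← inner_eq_integral_of_ae_eq .rfl hφL]
  exact (Submodule.mem_orthogonal' _ _).1 hy _ (mem_map_fst_testGraph hL hφ hφL)

lemma isSymmetricGraph_testGraph (hΩ : IsOpen Ω) (hae : ∀ᵐ x ∂μ, x ∈ Ω)
    (hL : ∀ φ, IsTest Ω φ → IsTest Ω (L φ))
    (hsymm : ∀ φ ψ, IsTest Ω φ → IsTest Ω ψ →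
      ∫ x, conj (L φ x) * ψ x ∂μ = ∫ x, conj (φ x) * L ψ x ∂μ) :
    IsSymmetricGraph (testGraph μ Ω L) where
  dense_domain := dense_map_fst_testGraph hΩ hae hL
  le_adjoint := by
    refine Submodule.span_le.2 ?_
    rintro q ⟨ψ, hψ, hq1, hq2⟩
    refine mem_adjoint_iff_inner_eq.2 fun p hp => ?_
    induction hp using Submodule.span_induction with
    | mem p hp =>
      obtain ⟨φ, hφ, hp1, hp2⟩ := hp
      rw [inner_eq_integral_of_ae_eq hp2 hq1, inner_eq_integral_of_ae_eq hp1 hq2, hsymm φ ψ hφ hψ]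
    | zero => simp only [Prod.fst_zero, Prod.snd_zero, inner_zero_left]
    | add p p' _ _ h h' => simp only [Prod.fst_add, Prod.snd_add, inner_add_left, h, h']
    | smul a p _ h => simp only [Prod.smul_fst, Prod.smul_snd, inner_smul_left, h]

end testGraph

end TestFunctions

/-! ### The Laplacian -/

section Laplacian

variable {n : ℕ}

local notation "E" => EuclideanSpace ℝ (Fin n)
local notation "𝐞" i:max => EuclideanSpace.single i (1 : ℝ)

namespace IsTest

variable {Ω : Set (EuclideanSpace ℝ (Fin n))} {φ ψ : EuclideanSpace ℝ (Fin n) → ℂ}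

protected lemma laplacian (hφ : IsTest Ω φ) : IsTest Ω (laplacian φ) :=
  IsTest.sum _ fun _ _ => (hφ.fderiv_apply _).fderiv_apply _

lemma integral_fderiv_mul (hφ : IsTest Ω φ) (hψ : IsTest Ω ψ) (v : E) :
    ∫ x, fderiv ℝ φ x v * ψ x = - ∫ x, φ x * fderiv ℝ ψ x v := by
  rw [integral_mul_fderiv_eq_neg_fderiv_mul_of_integrable
    (((hφ.fderiv_apply v).mul hψ).integrable _) ((hφ.mul (hψ.fderiv_apply v)).integrable _)
    ((hφ.mul hψ).integrable _) (fun x _ => hφ.contDiff.differentiable (by simp) x)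
    (fun x _ => hψ.contDiff.differentiable (by simp) x), neg_neg]

lemma integral_laplacian_mul (hφ : IsTest Ω φ) (hψ : IsTest Ω ψ) :
    ∫ x, laplacian φ x * ψ x = ∫ x, φ x * laplacian ψ x := by
  simp only [laplacian, Finset.sum_mul, Finset.mul_sum]
  rw [integral_finsetSum _ fun _ _ =>
      (((hφ.fderiv_apply _).fderiv_apply _).mul hψ).integrable _,
    integral_finsetSum _ fun _ _ =>
      (hφ.mul ((hψ.fderiv_apply _).fderiv_apply _)).integrable _]
  refine Finset.sum_congr rfl fun i _ => ?_
  rw [(hφ.fderiv_apply _).integral_fderiv_mul hψ, hφ.integral_fderiv_mul (hψ.fderiv_apply _),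
    neg_neg]

end IsTest

lemma laplacian_conj (f : E → ℂ) (x : E) :
    laplacian (fun y => conj (f y)) x = conj (laplacian f x) := by
  have hconj : ∀ (g : E → ℂ) (y v : E),
      fderiv ℝ (fun y => conj (g y)) y v = conj (fderiv ℝ g y v) := fun g y v =>
    congrArg (fun L : E →L[ℝ] ℂ => L v) (Complex.conjCLE.comp_fderiv (f := g) (x := y))
  simp only [laplacian, hconj, map_sum]

section ProductRule

variable {f g : EuclideanSpace ℝ (Fin n) → ℂ} {x : EuclideanSpace ℝ (Fin n)}

lemma differentiableAt_fderiv_apply (hf : ContDiffAt ℝ 2 f x) (v : E) :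
    DifferentiableAt ℝ (fun y => fderiv ℝ f y v) x :=
  ((hf.fderiv_right (m := 1) (by norm_num)).differentiableAt (by norm_num)).clm_apply
    (differentiableAt_const v)

lemma eventually_differentiableAt (hf : ContDiffAt ℝ 2 f x) :
    ∀ᶠ y in nhds x, DifferentiableAt ℝ f y :=
  (hf.eventually (by simp)).mono fun _ hy => hy.differentiableAt (by norm_num)

lemma laplacian_add (hf : ContDiffAt ℝ 2 f x) (hg : ContDiffAt ℝ 2 g x) :
    laplacian (fun y => f y + g y) x = laplacian f x + laplacian g x := by
  simp only [laplacian, ← Finset.sum_add_distrib]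
  refine Finset.sum_congr rfl fun i _ => ?_
  have hfst : (fun y => fderiv ℝ (fun y => f y + g y) y (𝐞 i)) =ᶠ[nhds x]
      fun y => fderiv ℝ f y (𝐞 i) + fderiv ℝ g y (𝐞 i) := by
    filter_upwards [eventually_differentiableAt hf, eventually_differentiableAt hg] with y hy hy'
    rw [fderiv_fun_add hy hy']
    rfl
  rw [hfst.fderiv_eq, fderiv_fun_add (differentiableAt_fderiv_apply hf _)
    (differentiableAt_fderiv_apply hg _)]
  rfl

lemma laplacian_mul (hf : ContDiffAt ℝ 2 f x) (hg : ContDiffAt ℝ 2 g x) :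
    laplacian (fun y => f y * g y) x = laplacian f x * g x +
      2 * ∑ i, fderiv ℝ f x (𝐞 i) * fderiv ℝ g x (𝐞 i) + f x * laplacian g x := by
  simp only [laplacian, Finset.mul_sum, Finset.sum_mul, ← Finset.sum_add_distrib]
  refine Finset.sum_congr rfl fun i _ => ?_
  have hfst : (fun y => fderiv ℝ (fun y => f y * g y) y (𝐞 i)) =ᶠ[nhds x]
      fun y => f y * fderiv ℝ g y (𝐞 i) + g y * fderiv ℝ f y (𝐞 i) := by
    filter_upwards [eventually_differentiableAt hf, eventually_differentiableAt hg] with y hy hy'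
    rw [fderiv_fun_mul hy hy']
    rfl
  have hf1 := (eventually_differentiableAt hf).self_of_nhds
  have hg1 := (eventually_differentiableAt hg).self_of_nhds
  have hf2 := differentiableAt_fderiv_apply hf (𝐞 i)
  have hg2 := differentiableAt_fderiv_apply hg (𝐞 i)
  rw [hfst.fderiv_eq, fderiv_fun_add (hf1.fun_mul hg2) (hg1.fun_mul hf2), fderiv_fun_mul hf1 hg2,
    fderiv_fun_mul hg1 hf2]
  simp only [add_apply, smul_apply, smul_eq_mul]
  ring

lemma laplacian_const_mul (hf : ContDiffAt ℝ 2 f x) (a : ℂ) :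
    laplacian (fun y => a * f y) x = a * laplacian f x := by
  rw [laplacian_mul contDiffAt_const hf]
  simp [laplacian]

end ProductRule

lemma differentiableAt_deriv {g : ℝ → ℂ} {r : ℝ} (hg : ContDiffAt ℝ 2 g r) :
    DifferentiableAt ℝ (deriv g) r :=
  ((hg.fderiv_right (m := 1) (by norm_num)).differentiableAt (by norm_num)).clm_apply
    (differentiableAt_const 1)

lemma sum_coord_mul_apply_single (L : E →L[ℝ] ℂ) (x : E) : ∑ i, (x i : ℂ) * L (𝐞 i) = L x := by
  conv_rhs => rw [← (EuclideanSpace.basisFun (Fin n) ℝ).sum_repr x, map_sum]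
  simp

section Radial

variable {g : ℝ → ℂ} {x : EuclideanSpace ℝ (Fin n)}

lemma fderiv_comp_norm_apply (hx : x ≠ 0) (hg : DifferentiableAt ℝ g ‖x‖) (v : E) :
    fderiv ℝ (fun y : E => g ‖y‖) x v = deriv g ‖x‖ / ‖x‖ * inner ℝ x v := by
  have hnorm : HasFDerivAt (fun y : E => ‖y‖) (‖x‖⁻¹ • innerSL ℝ x) x := by
    have h := (hasStrictFDerivAt_norm_sq x).hasFDerivAt.sqrt (by positivity)
    simp only [Real.sqrt_sq (norm_nonneg _)] at h
    refine h.congr_fderiv ?_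
    ext v
    simp only [one_div, mul_inv_rev, smul_apply, coe_innerSL_apply, nsmul_eq_mul, Nat.cast_ofNat,
      smul_eq_mul]
    field_simp
  have hcomp : HasFDerivAt (fun y : E => g ‖y‖) _ x := hg.hasDerivAt.hasFDerivAt.comp x hnorm
  rw [hcomp.fderiv]
  simp only [ContinuousLinearMap.comp_smulₛₗ, map_inv₀, Real.ringHom_apply, smul_apply,
    ContinuousLinearMap.comp_apply, coe_innerSL_apply, ContinuousLinearMap.toSpanSingleton_apply,
    Complex.real_smul, Complex.ofReal_inv]
  ring

lemma sum_fderiv_comp_norm_mul (hx : x ≠ 0) (hg : DifferentiableAt ℝ g ‖x‖) (L : E →L[ℝ] ℂ) :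
    ∑ i, fderiv ℝ (fun y : E => g ‖y‖) x (𝐞 i) * L (𝐞 i) = deriv g ‖x‖ / ‖x‖ * L x := by
  rw [← sum_coord_mul_apply_single L x, Finset.mul_sum]
  refine Finset.sum_congr rfl fun i _ => ?_
  rw [fderiv_comp_norm_apply hx hg, EuclideanSpace.inner_single_right, mul_assoc]
  simp

lemma laplacian_comp_norm (hx : x ≠ 0) (hg : ContDiffAt ℝ 2 g ‖x‖) :
    laplacian (fun y : E => g ‖y‖) x =
      deriv (deriv g) ‖x‖ + (n - 1) / ‖x‖ * deriv g ‖x‖ := by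
  have hr : (‖x‖ : ℂ) ≠ 0 := by simpa using hx
  have hfst : ∀ i : Fin n, (fun y => fderiv ℝ (fun y : E => g ‖y‖) y (𝐞 i)) =ᶠ[nhds x]
      fun y => deriv g ‖y‖ / ‖y‖ * (y i : ℂ) := fun i => by
    have hg1 : ∀ᶠ r in nhds ‖x‖, DifferentiableAt ℝ g r :=
      (hg.eventually (by simp)).mono fun _ h => h.differentiableAt (by norm_num)
    filter_upwards [continuous_norm.continuousAt.eventually hg1, isOpen_ne.mem_nhds hx]
      with y hy hy0
    rw [fderiv_comp_norm_apply hy0 hy, EuclideanSpace.inner_single_right]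
    simp
  have hg2 : DifferentiableAt ℝ (deriv g) ‖x‖ := differentiableAt_deriv hg
  have hquot : HasDerivAt (fun r : ℝ => deriv g r / r)
      ((deriv (deriv g) ‖x‖ * ‖x‖ - deriv g ‖x‖ * (1 : ℝ)) / (‖x‖ : ℂ) ^ 2) ‖x‖ :=
    hg2.hasDerivAt.fun_div (hasDerivAt_id ‖x‖).ofReal_comp hr
  have hnorm : DifferentiableAt ℝ (fun y : E => deriv g ‖y‖ / (‖y‖ : ℂ)) x :=
    hquot.differentiableAt.comp x (differentiableAt_id.norm ℝ hx)
  have hcoord : ∀ i : Fin n, HasFDerivAt (fun y : E => (y i : ℂ))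
      (Complex.ofRealCLM.comp (EuclideanSpace.proj i)) x := fun i =>
    (Complex.ofRealCLM.comp (EuclideanSpace.proj (𝕜 := ℝ) i)).hasFDerivAt
  have hterm : ∀ i : Fin n, fderiv ℝ (fun y => fderiv ℝ (fun y : E => g ‖y‖) y (𝐞 i)) x (𝐞 i) =
      deriv g ‖x‖ / ‖x‖ + fderiv ℝ (fun y : E => deriv g ‖y‖ / (‖y‖ : ℂ)) x (𝐞 i) *
        Complex.ofRealCLM.comp (innerSL ℝ x) (𝐞 i) := fun i => by
    rw [(hfst i).fderiv_eq, fderiv_fun_mul hnorm (hcoord i).differentiableAt, (hcoord i).fderiv]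
    simp [EuclideanSpace.inner_single_right, mul_comm]
  simp only [laplacian, hterm, Finset.sum_add_distrib]
  rw [sum_fderiv_comp_norm_mul hx hquot.differentiableAt, hquot.deriv]
  simp only [Finset.sum_const, Finset.card_univ, Fintype.card_fin, nsmul_eq_mul, Complex.ofReal_one,
    mul_one, ContinuousLinearMap.comp_apply, coe_innerSL_apply, inner_self_eq_norm_sq_to_K,
    Real.ringHom_apply, Complex.ofRealCLM_apply, Complex.ofReal_pow]
  field_simp
  ring

lemma laplacian_comp_norm_mul {P : E → ℂ} (hx : x ≠ 0) (hg : ContDiffAt ℝ 2 g ‖x‖)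
    (hP : ContDiffAt ℝ 2 P x) :
    laplacian (fun y => g ‖y‖ * P y) x =
      (deriv (deriv g) ‖x‖ + (n - 1) / ‖x‖ * deriv g ‖x‖) * P x +
        2 * (deriv g ‖x‖ / ‖x‖ * fderiv ℝ P x x) + g ‖x‖ * laplacian P x := by
  have hgn : ContDiffAt ℝ 2 (fun y : E => g ‖y‖) x := hg.comp x (contDiffAt_norm ℝ hx)
  rw [laplacian_mul hgn hP, laplacian_comp_norm hx hg,
    sum_fderiv_comp_norm_mul hx (hg.differentiableAt (by norm_num))]

end Radial

lemma laplacian_norm_sq_mul {P : E → ℂ} {x : E} (hP : ContDiffAt ℝ 2 P x) :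
    laplacian (fun y => ((‖y‖ ^ 2 : ℝ) : ℂ) * P y) x =
      2 * n * P x + 4 * fderiv ℝ P x x + ((‖x‖ ^ 2 : ℝ) : ℂ) * laplacian P x := by
  have hfst : ∀ (y : E) (i : Fin n),
      fderiv ℝ (fun y : E => ((‖y‖ ^ 2 : ℝ) : ℂ)) y (𝐞 i) = 2 * (y i : ℂ) := fun y i => by
    have h := Complex.ofRealCLM.hasFDerivAt.comp y (hasStrictFDerivAt_norm_sq y).hasFDerivAt
    rw [show (fun y : E => ((‖y‖ ^ 2 : ℝ) : ℂ)) = Complex.ofRealCLM ∘ fun y => ‖y‖ ^ 2 from rfl,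
      h.fderiv]
    simp [EuclideanSpace.inner_single_right]
  have hlap : laplacian (fun y : E => ((‖y‖ ^ 2 : ℝ) : ℂ)) x = 2 * n := by
    have hsnd : ∀ i : Fin n, HasFDerivAt (fun y : E => 2 * (y i : ℂ))
        ((2 : ℂ) • Complex.ofRealCLM.comp (EuclideanSpace.proj i)) x := fun i =>
      (Complex.ofRealCLM.comp (EuclideanSpace.proj (𝕜 := ℝ) i)).hasFDerivAt.const_mul 2
    simp only [laplacian, hfst, fun i => (hsnd i).fderiv]
    simp [mul_comm]
  have hsq : ContDiffAt ℝ 2 (fun y : E => ((‖y‖ ^ 2 : ℝ) : ℂ)) x :=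
    Complex.ofRealCLM.contDiff.contDiffAt.comp x (contDiff_norm_sq ℝ).contDiffAt
  rw [laplacian_mul hsq hP, hlap]
  simp only [hfst, mul_assoc, ← Finset.mul_sum, sum_coord_mul_apply_single]
  ring

end Laplacian

/-! ### Solid harmonics -/

section SolidHarmonics

variable {n m k : ℕ} {P Q : EuclideanSpace ℝ (Fin n) → ℂ}

local notation "E" => EuclideanSpace ℝ (Fin n)

/-- Smooth functions on `ℝⁿ` that are homogeneous of degree `m`, also for negative scalars. -/
structure IsHomog (m : ℕ) (Q : EuclideanSpace ℝ (Fin n) → ℂ) : Prop where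
  contDiff : ContDiff ℝ ∞ Q
  map_smul : ∀ (t : ℝ) x, Q (t • x) = (t : ℂ) ^ m * Q x

/-- Solid spherical harmonics of degree `d`. -/
structure IsSolidHarmonic (d : ℕ) (P : EuclideanSpace ℝ (Fin n) → ℂ) : Prop
    extends IsHomog d P where
  laplacian_eq_zero : ∀ x, laplacian P x = 0

lemma contDiff_fderiv_apply (hQ : ContDiff ℝ ∞ Q) (v : E) :
    ContDiff ℝ ∞ fun x => fderiv ℝ Q x v :=
  (hQ.fderiv_right (m := ∞) (by simp)).clm_apply contDiff_const

lemma contDiff_laplacian (hQ : ContDiff ℝ ∞ Q) : ContDiff ℝ ∞ (laplacian Q) :=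
  ContDiff.sum fun _ _ => contDiff_fderiv_apply (contDiff_fderiv_apply hQ _) _

lemma pow_mul_fderiv_smul {a : ℕ} (hQ : ContDiff ℝ ∞ Q)
    (h : ∀ (t : ℝ) x, (t : ℂ) ^ a * Q (t • x) = (t : ℂ) ^ m * Q x) (v : E) (t : ℝ) (x : E) :
    (t : ℂ) ^ (a + 1) * fderiv ℝ Q (t • x) v = (t : ℂ) ^ m * fderiv ℝ Q x v := by
  have hd : Differentiable ℝ Q := hQ.differentiable (by simp)
  have hleft : HasFDerivAt (fun x => (t : ℂ) ^ a * Q (t • x))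
      ((t : ℂ) ^ a • (fderiv ℝ Q (t • x)).comp (t • ContinuousLinearMap.id ℝ E)) x :=
    ((hd _).hasFDerivAt.comp x ((hasFDerivAt_id x).const_smul t)).const_mul _
  rw [funext (h t)] at hleft
  have heq := congrArg (fun L : E →L[ℝ] ℂ => L v)
    (hleft.unique ((hd x).hasFDerivAt.const_mul _))
  simp only [smul_apply, ContinuousLinearMap.comp_apply, ContinuousLinearMap.id_apply, map_smul,
    Complex.real_smul, smul_eq_mul] at heq
  rw [← heq]
  ring

namespace IsHomog

lemma contDiffAt (hQ : IsHomog m Q) (x : E) : ContDiffAt ℝ 2 Q x :=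
  hQ.contDiff.contDiffAt.of_le ENat.LEInfty.out

lemma fderiv_self (hQ : IsHomog m Q) (x : E) : fderiv ℝ Q x x = m * Q x := by
  have hleft : HasDerivAt (fun t : ℝ => Q (t • x)) (fderiv ℝ Q ((1 : ℝ) • x) ((1 : ℝ) • x)) 1 :=
    (hQ.contDiff.differentiable (by simp) _).hasFDerivAt.comp_hasDerivAt (1 : ℝ)
      ((hasDerivAt_id (1 : ℝ)).smul_const x)
  have hright : HasDerivAt (fun t : ℝ => (t : ℂ) ^ m * Q x) (m * Q x) 1 := by
    simpa using ((Complex.ofRealCLM.hasDerivAt (x := 1)).pow m).mul_const (Q x)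
  rw [funext fun t => hQ.map_smul t x] at hleft
  simpa using hleft.unique hright

lemma add (hP : IsHomog m P) (hQ : IsHomog m Q) : IsHomog m (fun x => P x + Q x) :=
  ⟨hP.contDiff.add hQ.contDiff, fun t x => by simp only [hP.map_smul, hQ.map_smul, mul_add]⟩

lemma const_mul (hQ : IsHomog m Q) (a : ℂ) : IsHomog m (fun x => a * Q x) :=
  ⟨contDiff_const.mul hQ.contDiff, fun t x => by simp only [hQ.map_smul, mul_left_comm]⟩

lemma mul (hP : IsHomog m P) (hQ : IsHomog k Q) : IsHomog (m + k) (fun x => P x * Q x) :=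
  ⟨hP.contDiff.mul hQ.contDiff, fun t x => by simp only [hP.map_smul, hQ.map_smul]; ring⟩

lemma star_comp (hQ : IsHomog m Q) : IsHomog m (fun x => conj (Q x)) :=
  ⟨Complex.conjCLE.contDiff.comp hQ.contDiff, fun t x => by simp [hQ.map_smul]⟩

lemma norm_sq_pow_mul (hQ : IsHomog m Q) (j : ℕ) :
    IsHomog (2 * j + m) (fun x => ((‖x‖ ^ 2 : ℝ) : ℂ) ^ j * Q x) where
  contDiff := ((Complex.ofRealCLM.contDiff.comp (contDiff_norm_sq ℝ)).pow j).mul hQ.contDiff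
  map_smul t x := by
    rw [hQ.map_smul, norm_smul, mul_pow, Real.norm_eq_abs, sq_abs]
    push_cast
    ring

lemma pow_mul_laplacian_smul (hQ : IsHomog m Q) (t : ℝ) (x : E) :
    (t : ℂ) ^ 2 * laplacian Q (t • x) = (t : ℂ) ^ m * laplacian Q x := by
  simp only [laplacian, Finset.mul_sum]
  refine Finset.sum_congr rfl fun i _ => ?_
  refine pow_mul_fderiv_smul (contDiff_fderiv_apply hQ.contDiff _) (a := 1) (fun t x => ?_) _ t x
  exact pow_mul_fderiv_smul hQ.contDiff (a := 0) (by simpa using hQ.map_smul) _ t x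

-- The scaling identity determines `t ^ a * laplacian Q (t • x)` for `t ≠ 0`, and for `t = 0` by
-- continuity.
lemma pow_mul_laplacian_smul_of_le {a b : ℕ} (ha : a ≤ 2) (hab : m + a = b + 2)
    (hQ : IsHomog m Q) (t : ℝ) (x : E) :
    (t : ℂ) ^ a * laplacian Q (t • x) = (t : ℂ) ^ b * laplacian Q x := by
  have hcont : Continuous fun t : ℝ => laplacian Q (t • x) :=
    (contDiff_laplacian hQ.contDiff).continuous.comp (by fun_prop)
  refine congrFun (Continuous.ext_on (dense_compl_singleton (0 : ℝ))
    (f := fun t : ℝ => (t : ℂ) ^ a * laplacian Q (t • x))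
    (g := fun t : ℝ => (t : ℂ) ^ b * laplacian Q x) (by fun_prop) (by fun_prop) fun t ht => ?_) t
  have ht0 : (t : ℂ) ^ (2 - a) ≠ 0 := pow_ne_zero _ (by simpa using ht)
  refine mul_left_cancel₀ ht0 ?_
  rw [← mul_assoc, ← mul_assoc, ← pow_add, ← pow_add, Nat.sub_add_cancel ha,
    hQ.pow_mul_laplacian_smul, show 2 - a + b = m by omega]

protected lemma laplacian (hQ : IsHomog (m + 2) Q) : IsHomog m (laplacian Q) where
  contDiff := contDiff_laplacian hQ.contDiff
  map_smul t x := by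
    simpa using hQ.pow_mul_laplacian_smul_of_le (a := 0) (b := m) (by norm_num) (by ring) t x

lemma isSolidHarmonic_of_lt_two (hm : m < 2) (hQ : IsHomog m Q) : IsSolidHarmonic m Q where
  toIsHomog := hQ
  laplacian_eq_zero x := by
    have h := hQ.pow_mul_laplacian_smul_of_le (a := 2 - m) (b := 0) (by omega) (by omega) 0 x
    rw [Complex.ofReal_zero, zero_pow (by omega)] at h
    simpa using h.symm

end IsHomog

lemma IsSolidHarmonic.laplacian_norm_sq_pow_mul {d : ℕ} (hP : IsSolidHarmonic d P) (j : ℕ)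
    (x : E) :
    laplacian (fun y => ((‖y‖ ^ 2 : ℝ) : ℂ) ^ (j + 1) * P y) x =
      (j + 1) * (4 * j + 2 * n + 4 * d) * (((‖x‖ ^ 2 : ℝ) : ℂ) ^ j * P x) := by
  have hhom := hP.norm_sq_pow_mul j
  have hfactor : (fun y : E => ((‖y‖ ^ 2 : ℝ) : ℂ) ^ (j + 1) * P y) =
      fun y => ((‖y‖ ^ 2 : ℝ) : ℂ) * (((‖y‖ ^ 2 : ℝ) : ℂ) ^ j * P y) := by
    funext y
    ring
  rw [hfactor, laplacian_norm_sq_mul (hhom.contDiffAt x), hhom.fderiv_self]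
  cases j with
  | zero =>
    simp only [pow_zero, one_mul, hP.laplacian_eq_zero]
    push_cast
    ring
  | succ j =>
    rw [hP.laplacian_norm_sq_pow_mul j x]
    push_cast
    ring

/-- The span of the functions `|x|^(2j) h` of degree `m`, where `h` is a solid harmonic. -/
def harmonicSpan (n m : ℕ) : Submodule ℂ (EuclideanSpace ℝ (Fin n) → ℂ) :=
  Submodule.span ℂ {f | ∃ (j d : ℕ) (h : EuclideanSpace ℝ (Fin n) → ℂ), 2 * j + d = m ∧
    IsSolidHarmonic d h ∧ f = fun x => ((‖x‖ ^ 2 : ℝ) : ℂ) ^ j * h x}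

lemma isHomog_of_mem_harmonicSpan (hQ : Q ∈ harmonicSpan n m) : IsHomog m Q := by
  induction hQ using Submodule.span_induction with
  | mem f hf =>
    obtain ⟨j, d, h, rfl, hh, rfl⟩ := hf
    exact hh.norm_sq_pow_mul j
  | zero => exact ⟨contDiff_const, by simp⟩
  | add f g _ _ hf hg => exact hf.add hg
  | smul a f _ hf => exact hf.const_mul a

lemma IsSolidHarmonic.mem_harmonicSpan (hQ : IsSolidHarmonic m Q) : Q ∈ harmonicSpan n m :=
  Submodule.subset_span ⟨0, m, Q, by ring, hQ, by simp⟩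

lemma exists_mem_harmonicSpan_laplacian_eq (hn : 0 < n) (hQ : Q ∈ harmonicSpan n m) :
    ∃ R ∈ harmonicSpan n (m + 2), ∀ x, laplacian R x = Q x := by
  induction hQ using Submodule.span_induction with
  | mem f hf =>
    obtain ⟨j, d, h, rfl, hh, rfl⟩ := hf
    have hc : ((j + 1) * (4 * j + 2 * n + 4 * d) : ℂ) ≠ 0 := by
      norm_cast
      positivity
    refine ⟨_, Submodule.smul_mem _ ((j + 1) * (4 * j + 2 * n + 4 * d) : ℂ)⁻¹
      (Submodule.subset_span ⟨j + 1, d, h, by ring, hh, rfl⟩), fun x => ?_⟩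
    refine (laplacian_const_mul ((hh.norm_sq_pow_mul (j + 1)).contDiffAt x) _).trans ?_
    rw [hh.laplacian_norm_sq_pow_mul, inv_mul_cancel_left₀ hc]
  | zero =>
    exact ⟨0, Submodule.zero_mem _, fun x => by simp [laplacian, Pi.zero_def]⟩
  | add f g _ _ hf hg =>
    obtain ⟨f', hf', hf2⟩ := hf
    obtain ⟨g', hg', hg2⟩ := hg
    refine ⟨f' + g', Submodule.add_mem _ hf' hg', fun x => ?_⟩
    rw [Pi.add_apply, ← hf2, ← hg2]
    exact laplacian_add ((isHomog_of_mem_harmonicSpan hf').contDiffAt x)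
      ((isHomog_of_mem_harmonicSpan hg').contDiffAt x)
  | smul a f _ hf =>
    obtain ⟨f', hf', hf2⟩ := hf
    refine ⟨a • f', Submodule.smul_mem _ _ hf', fun x => ?_⟩
    rw [Pi.smul_apply, ← hf2]
    exact laplacian_const_mul ((isHomog_of_mem_harmonicSpan hf').contDiffAt x) a

lemma IsHomog.mem_harmonicSpan (hn : 0 < n) (hQ : IsHomog m Q) : Q ∈ harmonicSpan n m := by
  induction m using Nat.strong_induction_on generalizing Q with
  | _ m ih =>
    obtain hm | hm := lt_or_ge m 2
    · exact (hQ.isSolidHarmonic_of_lt_two hm).mem_harmonicSpan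
    obtain ⟨k, rfl⟩ := Nat.exists_eq_add_of_le' hm
    obtain ⟨R, hR, hlap⟩ :=
      exists_mem_harmonicSpan_laplacian_eq hn (ih k (by omega) hQ.laplacian)
    have hneg : IsHomog (k + 2) (fun x => -1 * R x) :=
      (isHomog_of_mem_harmonicSpan hR).const_mul (-1)
    have hdiff : IsSolidHarmonic (k + 2) (fun x => Q x + -1 * R x) := by
      refine ⟨hQ.add hneg, fun x => ?_⟩
      rw [laplacian_add (hQ.contDiffAt x) (hneg.contDiffAt x),
        laplacian_const_mul ((isHomog_of_mem_harmonicSpan hR).contDiffAt x), hlap]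
      ring
    convert Submodule.add_mem _ hdiff.mem_harmonicSpan hR using 1
    funext x
    simp

end SolidHarmonics

/-! ### Totality of solid harmonics -/

section Density

variable {n : ℕ}

local notation "E" => EuclideanSpace ℝ (Fin n)

/-- The linear span of all smooth homogeneous functions on `ℝⁿ`. -/
def homogSpan (n : ℕ) : Submodule ℂ (EuclideanSpace ℝ (Fin n) → ℂ) :=
  Submodule.span ℂ {Q | ∃ m, IsHomog m Q}

lemma mul_mem_homogSpan {P Q : E → ℂ} (hP : P ∈ homogSpan n) (hQ : Q ∈ homogSpan n) :
    P * Q ∈ homogSpan n := by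
  have hmul := Submodule.mul_mem_mul hP hQ
  rw [homogSpan, Submodule.span_mul_span] at hmul
  refine Submodule.span_mono ?_ hmul
  rintro _ ⟨f, ⟨m, hf⟩, g, ⟨k, hg⟩, rfl⟩
  exact ⟨m + k, hf.mul hg⟩

lemma star_mem_homogSpan {Q : E → ℂ} (hQ : Q ∈ homogSpan n) : star Q ∈ homogSpan n := by
  induction hQ using Submodule.span_induction with
  | mem f hf => exact Submodule.subset_span (hf.imp fun _ hm => hm.star_comp)
  | zero => simp
  | add f g _ _ hf hg => simpa using Submodule.add_mem _ hf hg
  | smul a f _ hf => simpa using Submodule.smul_mem _ (star a) hf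

/-- The algebra of restrictions to `K` of linear combinations of smooth homogeneous functions. -/
def homogSubalgebra (K : Set (EuclideanSpace ℝ (Fin n))) : StarSubalgebra ℂ C(K, ℂ) where
  carrier := {f | ∃ Q ∈ homogSpan n, ∀ x : K, f x = Q x}
  mul_mem' := by
    rintro f g ⟨P, hP, hf⟩ ⟨Q, hQ, hg⟩
    exact ⟨P * Q, mul_mem_homogSpan hP hQ, fun x => by simp [hf, hg]⟩
  add_mem' := by
    rintro f g ⟨P, hP, hf⟩ ⟨Q, hQ, hg⟩
    exact ⟨P + Q, Submodule.add_mem _ hP hQ, fun x => by simp [hf, hg]⟩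
  algebraMap_mem' a :=
    ⟨fun _ => a, Submodule.subset_span ⟨0, contDiff_const, by simp⟩, fun _ => rfl⟩
  star_mem' := by
    rintro f ⟨P, hP, hf⟩
    exact ⟨star P, star_mem_homogSpan hP, fun x => by simp [hf]⟩

lemma isHomog_coord (i : Fin n) : IsHomog 1 (fun x : E => (x i : ℂ)) :=
  ⟨(Complex.ofRealCLM.comp (EuclideanSpace.proj (𝕜 := ℝ) i)).contDiff, by simp⟩

lemma separatesPoints_homogSubalgebra (K : Set E) :
    (homogSubalgebra K).SeparatesPoints := by
  intro x y hxy
  obtain ⟨i, hi⟩ : ∃ i, (x : E) i ≠ (y : E) i := by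
    by_contra! h
    exact hxy (Subtype.ext (PiLp.ext h))
  have hcont := (isHomog_coord i).contDiff.continuous.comp (continuous_subtype_val (p := (· ∈ K)))
  refine ⟨_, ⟨⟨_, hcont⟩, ⟨_, Submodule.subset_span ⟨1, isHomog_coord i⟩, fun _ => rfl⟩, rfl⟩, ?_⟩
  simpa using hi

lemma exists_mem_homogSpan_norm_sub_lt {K : Set E} (hK : IsCompact K) {ψ : E → ℂ}
    (hψ : ContinuousOn ψ K) {ε : ℝ} (hε : 0 < ε) :
    ∃ Q ∈ homogSpan n, ∀ x ∈ K, ‖ψ x - Q x‖ < ε := by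
  have := isCompact_iff_compactSpace.1 hK
  have hψ' : (⟨K.domRestrict ψ, hψ.domRestrict⟩ : C(K, ℂ)) ∈
      (homogSubalgebra K).topologicalClosure := by
    rw [ContinuousMap.starSubalgebra_topologicalClosure_eq_top_of_separatesPoints _
      (separatesPoints_homogSubalgebra K)]
    trivial
  obtain ⟨g, ⟨Q, hQ, hg⟩, hdist⟩ := Metric.mem_closure_iff.1 hψ' ε hε
  refine ⟨Q, hQ, fun x hx => ?_⟩
  have h := (ContinuousMap.dist_lt_iff hε).1 hdist ⟨x, hx⟩
  rwa [hg, dist_eq_norm] at h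

section Moments

variable {μ : Measure (EuclideanSpace ℝ (Fin n))} {w : EuclideanSpace ℝ (Fin n) → ℂ}
  {K : Set (EuclideanSpace ℝ (Fin n))}

lemma integrable_mul_of_support_subset (hK : IsCompact K) (hw : Integrable w μ)
    (hwK : Function.support w ⊆ K) {Q : E → ℂ} (hQ : Continuous Q) :
    Integrable (fun x => w x * Q x) μ :=
  (integrableOn_iff_integrable_of_support_subset
    ((Function.support_mul_subset_left w Q).trans hwK)).1
    (hw.integrableOn.mul_continuousOn hQ.continuousOn hK)

lemma integral_mul_eq_zero_of_mem_span (hK : IsCompact K) (hw : Integrable w μ)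
    (hwK : Function.support w ⊆ K) {S : Set (E → ℂ)}
    (hS : ∀ Q ∈ S, Continuous Q ∧ ∫ x, w x * Q x ∂μ = 0) {Q : E → ℂ}
    (hQ : Q ∈ Submodule.span ℂ S) : Continuous Q ∧ ∫ x, w x * Q x ∂μ = 0 := by
  induction hQ using Submodule.span_induction with
  | mem f hf => exact hS f hf
  | zero => exact ⟨continuous_zero, by simp⟩
  | add f g _ _ hf hg =>
    refine ⟨hf.1.add hg.1, ?_⟩
    simp only [Pi.add_apply, mul_add]
    rw [integral_add (integrable_mul_of_support_subset hK hw hwK hf.1)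
      (integrable_mul_of_support_subset hK hw hwK hg.1), hf.2, hg.2, add_zero]
  | smul a f _ hf =>
    refine ⟨hf.1.const_smul a, ?_⟩
    simp only [Pi.smul_apply, smul_eq_mul, mul_left_comm _ a]
    rw [integral_const_mul, hf.2, mul_zero]

lemma integral_mul_eq_zero_of_forall_isHomog (hK : IsCompact K) (hw : Integrable w μ)
    (hwK : Function.support w ⊆ K) (h : ∀ m Q, IsHomog m Q → ∫ x, w x * Q x ∂μ = 0) {ψ : E → ℂ}
    (hψ : Continuous ψ) : ∫ x, w x * ψ x ∂μ = 0 := by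
  have hwψ := integrable_mul_of_support_subset hK hw hwK hψ
  set C := ∫ x, ‖w x‖ ∂μ with hC
  have hbound : ∀ ε > 0, ‖∫ x, w x * ψ x ∂μ‖ ≤ ε * C := by
    intro ε hε
    obtain ⟨Q, hQ, hQε⟩ := exists_mem_homogSpan_norm_sub_lt hK hψ.continuousOn hε
    obtain ⟨hQcont, hQ0⟩ := integral_mul_eq_zero_of_mem_span hK hw hwK
      (S := {Q | ∃ m, IsHomog m Q}) (fun Q ⟨m, hQ⟩ => ⟨hQ.contDiff.continuous, h m Q hQ⟩) hQ
    have hwQ := integrable_mul_of_support_subset hK hw hwK hQcont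
    rw [← sub_zero (∫ x, w x * ψ x ∂μ), ← hQ0, ← integral_sub hwψ hwQ, hC, ← integral_const_mul]
    refine norm_integral_le_of_norm_le (hw.norm.const_mul ε) (.of_forall fun x => ?_)
    rw [← mul_sub, norm_mul, mul_comm]
    by_cases hx : x ∈ K
    · gcongr
      exact (hQε x hx).le
    · simp [Function.notMem_support.1 fun hx' => hx (hwK hx')]
  have hC1 : 0 < C + 1 := add_pos_of_nonneg_of_pos (integral_nonneg fun x => norm_nonneg _) one_pos
  refine norm_le_zero_iff.1 (le_of_forall_pos_le_add fun ε hε => ?_)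
  refine (hbound (ε / (C + 1)) (div_pos hε hC1)).trans ?_
  rw [zero_add, div_mul_eq_mul_div, div_le_iff₀ hC1]
  linarith

end Moments

lemma exists_isTest_eq_one {X : Type*} [NormedAddCommGroup X] [NormedSpace ℝ X]
    [FiniteDimensional ℝ X] {K Ω : Set X} (hK : IsCompact K) (hΩ : IsOpen Ω) (hKΩ : K ⊆ Ω) :
    ∃ χ, IsTest Ω χ ∧ ∀ x ∈ K, χ x = 1 := by
  have : ProperSpace X := FiniteDimensional.proper ℝ X
  obtain ⟨C, hC, hKC, hCΩ⟩ := exists_compact_between hK hΩ hKΩ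
  obtain ⟨f, hf0, hf1, -⟩ := exists_contMDiffMap_zero_one_of_isClosed (n := ⊤)
    (modelWithCornersSelf ℝ X) isOpen_interior.isClosed_compl hK.isClosed
    (Set.disjoint_compl_left_iff_subset.2 hKC)
  refine ⟨fun x => (f x : ℂ), .of_support_subset hC hCΩ (fun x hx => ?_) fun x _ => ?_,
    fun x hx => by simp [hf1 hx]⟩
  · by_contra hxC
    exact hx (by simp [hf0 fun hx' => hxC (interior_subset hx')])
  · exact (Complex.ofRealCLM.contDiff.comp f.contMDiff.contDiff).contDiffAt

lemma IsTest.comp_norm {κ : ℝ → ℂ} (hκ : IsTest (Set.Ioi 0) κ) :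
    IsTest {0}ᶜ (fun x : E => κ ‖x‖) := by
  have hbdd : Bornology.IsBounded ((fun x : E => ‖x‖) ⁻¹' tsupport κ) := by
    obtain ⟨R, hR⟩ := hκ.hasCompactSupport.isCompact.isBounded.exists_norm_le
    exact isBounded_iff_forall_norm_le.2 ⟨R, fun x hx => by simpa using hR _ hx⟩
  refine .of_support_subset (Metric.isCompact_of_isClosed_isBounded
    ((isClosed_tsupport κ).preimage continuous_norm) hbdd) ?_ (fun x hx => subset_tsupport κ hx)
    fun x hx => hκ.contDiff.contDiffAt.comp x (contDiffAt_norm ℝ hx)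
  rintro x hx rfl
  simpa using hκ.tsupport_subset hx

lemma exists_isTest_apply_norm_eq_one {ψ : E → ℂ} (hψ : IsTest {0}ᶜ ψ) :
    ∃ χ, IsTest (Set.Ioi 0) χ ∧ ∀ x, χ ‖x‖ * ψ x = ψ x := by
  obtain ⟨χ, hχ, hχ1⟩ := exists_isTest_eq_one (hψ.hasCompactSupport.isCompact.image continuous_norm)
    isOpen_Ioi (Set.image_subset_iff.2 fun x hx => norm_pos_iff.2 (hψ.tsupport_subset hx))
  refine ⟨χ, hχ, fun x => ?_⟩
  by_cases hx : x ∈ tsupport ψ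
  · rw [hχ1 _ ⟨x, hx, rfl⟩, one_mul]
  · rw [image_eq_zero_of_notMem_tsupport hx, mul_zero]

lemma integral_comp_norm_mul_eq_zero_of_isHomog (hn : 0 < n) {w : E → ℂ}
    (hw : ∀ φ, IsTest {0}ᶜ φ → Integrable fun x => w x * φ x)
    (h : ∀ d P, IsSolidHarmonic d P → ∀ κ, IsTest (Set.Ioi 0) κ →
      ∫ x, w x * (κ ‖x‖ * P x) = 0) {κ : ℝ → ℂ} (hκ : IsTest (Set.Ioi 0) κ) {m : ℕ} {Q : E → ℂ}
    (hQ : IsHomog m Q) : ∫ x, w x * κ ‖x‖ * Q x = 0 := by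
  refine (integral_mul_eq_zero_of_mem_span hκ.comp_norm.hasCompactSupport.isCompact
    (hw _ hκ.comp_norm) ((Function.support_mul_subset_right w _).trans (subset_tsupport _)) ?_
    (hQ.mem_harmonicSpan hn)).2
  rintro _ ⟨j, d, P, -, hP, rfl⟩
  refine ⟨(hP.norm_sq_pow_mul j).contDiff.continuous, ?_⟩
  have hpow : ContDiff ℝ ∞ fun r : ℝ => ((r ^ 2 : ℝ) : ℂ) ^ j :=
    (Complex.ofRealCLM.contDiff.comp (contDiff_id.pow 2)).pow j
  rw [← h d P hP _ (hκ.mul_of_contDiffAt fun r _ => hpow.contDiffAt)]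
  exact integral_congr_ae (.of_forall fun x => by ring)

lemma Lp_eq_zero_of_forall_isSolidHarmonic (hn : 0 < n) (y : Lp ℂ 2 (volume : Measure E))
    (h : ∀ d P, IsSolidHarmonic d P → ∀ κ, IsTest (Set.Ioi 0) κ →
      ∫ x, conj (y x) * (κ ‖x‖ * P x) = 0) : y = 0 := by
  have : Nonempty (Fin n) := ⟨⟨0, hn⟩⟩
  have hint : ∀ φ, IsTest {0}ᶜ φ → Integrable fun x => conj (y x) * φ x := fun φ hφ =>
    (Lp.memLp y).star.integrable_mul (hφ.memLp volume)
  refine Lp_eq_zero_of_forall_isTest isOpen_compl_singleton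
    ((Set.countable_singleton (0 : E)).ae_notMem volume) y fun ψ hψ => ?_
  obtain ⟨χ, hχ, hχψ⟩ := exists_isTest_apply_norm_eq_one hψ
  have hzero := integral_mul_eq_zero_of_forall_isHomog hχ.comp_norm.hasCompactSupport.isCompact
    (hint _ hχ.comp_norm) ((Function.support_mul_subset_right _ _).trans (subset_tsupport _))
    (fun m Q hQ => integral_comp_norm_mul_eq_zero_of_isHomog hn hint h hχ hQ)
    hψ.contDiff.continuous
  simpa only [mul_assoc, hχψ] using hzero

end Density

/-! ### Separated functions -/

section SeparatedFunctions

variable {n d : ℕ} {P : EuclideanSpace ℝ (Fin n) → ℂ} {f : ℝ → ℂ} {r : ℝ}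

local notation "E" => EuclideanSpace ℝ (Fin n)

lemma contDiffAt_ofReal_rpow (hr : r ≠ 0) (b : ℝ) :
    ContDiffAt ℝ ∞ (fun r : ℝ => ((r ^ b : ℝ) : ℂ)) r :=
  Complex.ofRealCLM.contDiff.contDiffAt.comp r (Real.contDiffAt_rpow_const_of_ne hr)

lemma contDiffAt_ofReal_div_pow (hr : r ≠ 0) (a : ℝ) (k : ℕ) :
    ContDiffAt ℝ ∞ (fun r : ℝ => ((a / r ^ k : ℝ) : ℂ)) r :=
  Complex.ofRealCLM.contDiff.contDiffAt.comp r
    (contDiffAt_const.div (contDiffAt_id.pow k) (pow_ne_zero k hr))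

lemma ofReal_rpow_mul_rpow_neg (hr : 0 < r) (b : ℝ) :
    ((r ^ b : ℝ) : ℂ) * ((r ^ (-b) : ℝ) : ℂ) = 1 := by
  rw [← Complex.ofReal_mul, ← Real.rpow_add hr, add_neg_cancel, Real.rpow_zero, Complex.ofReal_one]

lemma hasDerivAt_ofReal_rpow_mul (hr : 0 < r) (b : ℝ) (hf : DifferentiableAt ℝ f r) :
    HasDerivAt (fun r : ℝ => ((r ^ b : ℝ) : ℂ) * f r)
      (((r ^ b : ℝ) : ℂ) * (deriv f r + b / r * f r)) r := by
  have hpow := (Real.hasDerivAt_rpow_const (p := b) (.inl hr.ne')).ofReal_comp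
  refine (hpow.mul hf.hasDerivAt).congr_deriv ?_
  rw [Real.rpow_sub_one hr.ne']
  push_cast
  ring

lemma deriv_deriv_ofReal_rpow_mul (hr : 0 < r) (b : ℝ) (hf : ContDiff ℝ ∞ f) :
    deriv (deriv fun r : ℝ => ((r ^ b : ℝ) : ℂ) * f r) r = ((r ^ b : ℝ) : ℂ) *
      (deriv (deriv f) r + 2 * (b / r) * deriv f r + b * (b - 1) / r ^ 2 * f r) := by
  have hr0 : (r : ℂ) ≠ 0 := Complex.ofReal_ne_zero.2 hr.ne'
  have hf1 : Differentiable ℝ f := hf.differentiable (by simp)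
  have hf2 : Differentiable ℝ (deriv f) := fun s =>
    differentiableAt_deriv (hf.contDiffAt.of_le ENat.LEInfty.out)
  have hfst : (deriv fun r : ℝ => ((r ^ b : ℝ) : ℂ) * f r) =ᶠ[nhds r]
      fun r => ((r ^ b : ℝ) : ℂ) * (deriv f r + b / r * f r) := by
    filter_upwards [lt_mem_nhds hr] with s hs using (hasDerivAt_ofReal_rpow_mul hs b (hf1 s)).deriv
  have hsnd : HasDerivAt (fun r : ℝ => deriv f r + b / r * f r) (deriv (deriv f) r +
      (-b / r ^ 2 * f r + b / r * deriv f r)) r := by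
    have hinv : HasDerivAt (fun r : ℝ => (b : ℂ) / r) (-b / r ^ 2) r := by
      simpa using (hasDerivAt_const r (b : ℂ)).fun_div (hasDerivAt_id r).ofReal_comp hr0
    exact (hf2 r).hasDerivAt.add (hinv.mul (hf1 r).hasDerivAt)
  rw [hfst.deriv_eq, (hasDerivAt_ofReal_rpow_mul hr b hsnd.differentiableAt).deriv, hsnd.deriv]
  field_simp
  ring

namespace IsTest

protected lemma bExp (hf : IsTest (Set.Ioi 0) f) (n ℓ : ℕ) :
    IsTest (Set.Ioi 0) (bExp n ℓ f) := by
  have hderiv : IsTest (Set.Ioi 0) (deriv (deriv f)) := (hf.fderiv_apply 1).fderiv_apply 1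
  convert hderiv.add (hf.mul_of_contDiffAt fun r hr => contDiffAt_ofReal_div_pow (ne_of_gt hr)
    (-((((n : ℝ) + 2 * ℓ - 1) * ((n : ℝ) + 2 * ℓ - 3)) / 4)) 2) using 1
  ext r
  simp only [_root_.bExp]
  push_cast
  ring

protected lemma tau2nlExp (hf : IsTest (Set.Ioi 0) f) (n ℓ : ℕ) (c : ℝ) :
    IsTest (Set.Ioi 0) (tau2nlExp n ℓ c f) :=
  ((hf.bExp n ℓ).bExp n ℓ).add
    (hf.mul_of_contDiffAt fun _ hr => contDiffAt_ofReal_div_pow (ne_of_gt hr) c 4)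

end IsTest

/-- The function `r ^ (-(n - 1) / 2) f(r) P(ω)` in polar coordinates `x = rω`, for `P` homogeneous
of degree `d`. With this power of `r` the map `f ↦ sepFun n d P f` is a multiple of an isometry
from `L²((0, ∞); dr)` to `L²(ℝⁿ)`. -/
def sepFun (n d : ℕ) (P : EuclideanSpace ℝ (Fin n) → ℂ) (f : ℝ → ℂ)
    (x : EuclideanSpace ℝ (Fin n)) : ℂ :=
  ((‖x‖ ^ (-(((n : ℝ) - 1) / 2 + d)) : ℝ) : ℂ) * f ‖x‖ * P x

lemma isTest_sepFun (hf : IsTest (Set.Ioi 0) f) (hP : ContDiff ℝ ∞ P) :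
    IsTest {0}ᶜ (sepFun n d P f) := by
  have hrad : IsTest {0}ᶜ fun x : E => ((‖x‖ ^ (-(((n : ℝ) - 1) / 2 + d)) : ℝ) : ℂ) * f ‖x‖ :=
    (hf.mul_of_contDiffAt fun r hr => contDiffAt_ofReal_rpow (ne_of_gt hr) _).comp_norm
  have hmul := hrad.mul_of_contDiffAt fun _ _ => hP.contDiffAt
  simp only [mul_comm (P _)] at hmul
  exact hmul

lemma exists_isTest_sepFun_eq {κ : ℝ → ℂ} (hκ : IsTest (Set.Ioi 0) κ) (d : ℕ) (P : E → ℂ) :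
    ∃ f, IsTest (Set.Ioi 0) f ∧ sepFun n d P f = fun x => κ ‖x‖ * P x := by
  refine ⟨fun r => ((r ^ (((n : ℝ) - 1) / 2 + d) : ℝ) : ℂ) * κ r,
    hκ.mul_of_contDiffAt fun r hr => contDiffAt_ofReal_rpow (ne_of_gt hr) _, funext fun x => ?_⟩
  rcases eq_or_ne x 0 with rfl | hx
  · simp [sepFun, hκ.apply_eq_zero (x := 0) (by simp)]
  · have hpow := ofReal_rpow_mul_rpow_neg (norm_pos_iff.2 hx) (((n : ℝ) - 1) / 2 + d)
    rw [sepFun]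
    linear_combination κ ‖x‖ * P x * hpow

lemma laplacian_sepFun (hP : IsSolidHarmonic d P) (hf : IsTest (Set.Ioi 0) f) :
    laplacian (sepFun n d P f) = sepFun n d P (bExp n d f) := by
  ext x
  rcases eq_or_ne x 0 with rfl | hx
  · rw [(isTest_sepFun hf hP.contDiff).laplacian.apply_eq_zero (by simp),
      (isTest_sepFun (hf.bExp n d) hP.contDiff).apply_eq_zero (by simp)]
  have hr : 0 < ‖x‖ := norm_pos_iff.2 hx
  have hr0 : (‖x‖ : ℂ) ≠ 0 := Complex.ofReal_ne_zero.2 hr.ne'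
  have hrad : ContDiffAt ℝ 2
      (fun r : ℝ => ((r ^ (-(((n : ℝ) - 1) / 2 + d)) : ℝ) : ℂ) * f r) ‖x‖ :=
    ((contDiffAt_ofReal_rpow hr.ne' _).mul hf.contDiff.contDiffAt).of_le ENat.LEInfty.out
  have hsep : sepFun n d P f = fun y =>
      (fun r : ℝ => ((r ^ (-(((n : ℝ) - 1) / 2 + d)) : ℝ) : ℂ) * f r) ‖y‖ * P y := rfl
  rw [hsep, laplacian_comp_norm_mul hx hrad (hP.contDiffAt x), hP.fderiv_self,
    hP.laplacian_eq_zero, deriv_deriv_ofReal_rpow_mul hr _ hf.contDiff,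
    (hasDerivAt_ofReal_rpow_mul hr _ (hf.contDiff.differentiable (by simp) _)).deriv, sepFun, bExp]
  push_cast
  field_simp
  ring

section Bilaplacian

variable {φ ψ : EuclideanSpace ℝ (Fin n) → ℂ}

/-- The differential expression `Δ² + c|x|⁻⁴`. -/
def bilaplacianExp (n : ℕ) (c : ℝ) (φ : EuclideanSpace ℝ (Fin n) → ℂ)
    (x : EuclideanSpace ℝ (Fin n)) : ℂ :=
  laplacian (laplacian φ) x + ((c * (‖x‖ ^ 4)⁻¹ : ℝ) : ℂ) * φ x

protected lemma IsTest.bilaplacianExp (hφ : IsTest {0}ᶜ φ) (c : ℝ) :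
    IsTest {0}ᶜ (bilaplacianExp n c φ) :=
  hφ.laplacian.laplacian.add <| hφ.mul_of_contDiffAt fun _ hx =>
    (contDiffAt_ofReal_div_pow (norm_ne_zero_iff.2 hx) c 4).comp _ (contDiffAt_norm ℝ hx)

lemma integral_bilaplacianExp_mul (c : ℝ) (hφ : IsTest {0}ᶜ φ) (hψ : IsTest {0}ᶜ ψ) :
    ∫ x, conj (bilaplacianExp n c φ x) * ψ x = ∫ x, conj (φ x) * bilaplacianExp n c ψ x := by
  have hconj : (fun x => conj (laplacian (laplacian φ) x)) =
      laplacian (laplacian fun x => conj (φ x)) := by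
    simp only [funext (laplacian_conj _)]
  have hlap : ∫ x, conj (laplacian (laplacian φ) x) * ψ x =
      ∫ x, conj (φ x) * laplacian (laplacian ψ) x := by
    rw [← hφ.star_comp.integral_laplacian_mul hψ.laplacian,
      ← hφ.star_comp.laplacian.integral_laplacian_mul hψ, ← hconj]
  have hint : Integrable fun x => conj (laplacian (laplacian φ) x) * ψ x :=
    (hφ.laplacian.laplacian.star_comp.mul hψ).integrable _
  have hint' : Integrable fun x => conj (φ x) * laplacian (laplacian ψ) x :=
    (hφ.star_comp.mul hψ.laplacian.laplacian).integrable _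
  rw [← sub_eq_zero] at hlap ⊢
  rw [← integral_sub hint hint'] at hlap
  rw [← integral_sub (((hφ.bilaplacianExp c).star_comp.mul hψ).integrable _)
    ((hφ.star_comp.mul (hψ.bilaplacianExp c)).integrable _), ← hlap]
  refine integral_congr_ae (.of_forall fun x => ?_)
  simp only [bilaplacianExp, map_add, map_mul, Complex.conj_ofReal]
  ring

lemma bilaplacianExp_sepFun (c : ℝ) (hP : IsSolidHarmonic d P) (hf : IsTest (Set.Ioi 0) f) :
    bilaplacianExp n c (sepFun n d P f) = sepFun n d P (tau2nlExp n d c f) := by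
  ext x
  rw [bilaplacianExp, laplacian_sepFun hP hf, laplacian_sepFun hP (hf.bExp n d)]
  simp only [sepFun, tau2nlExp, div_eq_mul_inv]
  ring

end Bilaplacian

end SeparatedFunctions

/-! ### Polar coordinates -/

instance : IsFiniteMeasureOnCompacts lebIoi := by
  unfold lebIoi
  infer_instance

lemma ae_lebIoi_pos : ∀ᵐ r ∂lebIoi, (0 : ℝ) < r :=
  ae_restrict_mem measurableSet_Ioi

section PolarCoordinates

/-- The measure `r ^ k dr` on `(0, ∞)`, the radial part of the Lebesgue measure of `ℝ ^ (k + 1)` in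
polar coordinates. -/
def radialMeasure (k : ℕ) : Measure ℝ :=
  lebIoi.withDensity fun r => ENNReal.ofReal (r ^ k)

lemma radialMeasure_eq_map (k : ℕ) :
    radialMeasure k = (Measure.volumeIoiPow k).map Subtype.val := by
  have hemb := MeasurableEmbedding.subtype_coe (measurableSet_Ioi (a := (0 : ℝ)))
  ext s hs
  rw [Measure.map_apply measurable_subtype_coe hs, Measure.volumeIoiPow,
    withDensity_apply _ (measurable_subtype_coe hs), radialMeasure, withDensity_apply _ hs,
    lebIoi, ← map_comap_subtype_coe measurableSet_Ioi, hemb.restrict_map, hemb.lintegral_map]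

instance (k : ℕ) : SFinite (radialMeasure k) := by
  unfold radialMeasure lebIoi
  infer_instance

lemma radialMeasure_absolutelyContinuous (k : ℕ) : radialMeasure k ≪ lebIoi :=
  withDensity_absolutelyContinuous _ _

lemma ae_prod_radialMeasure_pos {Y : Type*} [MeasurableSpace Y] (σ : Measure Y) (k : ℕ) :
    ∀ᵐ p ∂σ.prod (radialMeasure k), 0 < p.2 :=
  Measure.quasiMeasurePreserving_snd.ae
    ((radialMeasure_absolutelyContinuous k).ae_le ae_lebIoi_pos)

section

variable {k : ℕ} {F : Type*} [NormedAddCommGroup F] [NormedSpace ℝ F] {f : ℝ → F}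

lemma integrable_radialMeasure_iff :
    Integrable f (radialMeasure k) ↔ Integrable (fun r => r ^ k • f r) lebIoi := by
  rw [radialMeasure, integrable_withDensity_iff_integrable_smul' (by fun_prop) (by simp)]
  refine integrable_congr ?_
  filter_upwards [ae_lebIoi_pos] with r hr
  rw [ENNReal.toReal_ofReal (by positivity)]

lemma integral_radialMeasure : ∫ r, f r ∂radialMeasure k = ∫ r, r ^ k • f r ∂lebIoi := by
  rw [radialMeasure, integral_withDensity_eq_integral_toReal_smul (by fun_prop) (by simp)]
  refine integral_congr_ae ?_
  filter_upwards [ae_lebIoi_pos] with r hr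
  rw [ENNReal.toReal_ofReal (by positivity)]

end

variable {E : Type*} [NormedAddCommGroup E] [NormedSpace ℝ E]

lemma norm_smul_sphere (w : Metric.sphere (0 : E) 1) {r : ℝ} (hr : 0 < r) : ‖r • (w : E)‖ = r := by
  simp [norm_smul, abs_of_pos hr]

variable [MeasurableSpace E] [BorelSpace E] [FiniteDimensional ℝ E] [Nontrivial E]
  (μ : Measure E) [μ.IsAddHaarMeasure]

lemma measurePreserving_smul_sphere :
    MeasurePreserving (fun p : Metric.sphere (0 : E) 1 × ℝ => p.2 • (p.1 : E))
      (μ.toSphere.prod (radialMeasure (Module.finrank ℝ E - 1))) μ := by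
  have hmeas : Measurable fun p : Metric.sphere (0 : E) 1 × ℝ => p.2 • (p.1 : E) := by fun_prop
  have hprod : μ.toSphere.prod (radialMeasure (Module.finrank ℝ E - 1)) =
      (μ.toSphere.prod (Measure.volumeIoiPow (Module.finrank ℝ E - 1))).map
        (Prod.map id Subtype.val) := by
    rw [radialMeasure_eq_map, ← Measure.map_prod_map _ _ measurable_id measurable_subtype_coe,
      Measure.map_id]
  have hcomp : ((fun p : Metric.sphere (0 : E) 1 × ℝ => p.2 • (p.1 : E)) ∘
      Prod.map id Subtype.val) ∘ homeomorphUnitSphereProd E = Subtype.val := by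
    ext1 x
    exact congrArg Subtype.val ((homeomorphUnitSphereProd E).symm_apply_apply x)
  refine ⟨hmeas, ?_⟩
  rw [hprod, ← μ.measurePreserving_homeomorphUnitSphereProd.map_eq,
    Measure.map_map hmeas (by fun_prop), Measure.map_map (by fun_prop) (by fun_prop), hcomp,
    map_comap_subtype_coe (measurableSet_singleton (0 : E)).compl, restrict_compl_singleton]

lemma quasiMeasurePreserving_norm :
    Measure.QuasiMeasurePreserving (fun x : E => ‖x‖) μ lebIoi := by
  have hpolar := measurePreserving_smul_sphere μ
  refine ⟨measurable_norm, ?_⟩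
  rw [← hpolar.map_eq, Measure.map_map measurable_norm hpolar.measurable]
  have hnorm : (fun x : E => ‖x‖) ∘ (fun p : Metric.sphere (0 : E) 1 × ℝ => p.2 • (p.1 : E))
      =ᵐ[μ.toSphere.prod (radialMeasure (Module.finrank ℝ E - 1))] Prod.snd := by
    filter_upwards [ae_prod_radialMeasure_pos _ _] with p hp using norm_smul_sphere _ hp
  rw [Measure.map_congr hnorm]
  exact Measure.quasiMeasurePreserving_snd.absolutelyContinuous.trans
    (radialMeasure_absolutelyContinuous _)

variable {μ} {F : Type*} [NormedAddCommGroup F] [NormedSpace ℝ F] {f : E → F}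

lemma integral_eq_integral_sphere (hf : Integrable f μ) :
    ∫ x, f x ∂μ = ∫ r, r ^ (Module.finrank ℝ E - 1) •
      ∫ w : Metric.sphere (0 : E) 1, f (r • (w : E)) ∂μ.toSphere ∂lebIoi := by
  have hpolar := measurePreserving_smul_sphere μ
  have hmap : ∫ x, f x ∂μ = ∫ p : Metric.sphere (0 : E) 1 × ℝ, f (p.2 • (p.1 : E))
      ∂μ.toSphere.prod (radialMeasure (Module.finrank ℝ E - 1)) := by
    conv_lhs => rw [← hpolar.map_eq]
    exact integral_map hpolar.aemeasurable (hpolar.map_eq.symm ▸ hf.aestronglyMeasurable)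
  have hint : Integrable (fun p : Metric.sphere (0 : E) 1 × ℝ => f (p.2 • (p.1 : E)))
      (μ.toSphere.prod (radialMeasure (Module.finrank ℝ E - 1))) :=
    (hpolar.integrable_comp hf.aestronglyMeasurable).2 hf
  rw [hmap, integral_prod_symm _ hint, integral_radialMeasure]

end PolarCoordinates

section ParametricIntegral

variable {X F : Type*} [NormedAddCommGroup X] [NormedSpace ℝ X] [NormedAddCommGroup F]
  [NormedSpace ℝ F] {K : Set X} [CompactSpace K] [MeasurableSpace K] [OpensMeasurableSpace K]
  (μ : Measure K) [IsFiniteMeasure μ] {G : ℝ × X → F}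

lemma hasDerivAt_integral_of_contDiff (hG : ContDiff ℝ 1 G) (r : ℝ) :
    HasDerivAt (fun r => ∫ w : K, G (r, w) ∂μ)
      (∫ w : K, fderiv ℝ G (r, w) ((1 : ℝ), (0 : X)) ∂μ) r := by
  have hcont : Continuous fun q : ℝ × K => fderiv ℝ G (q.1, (q.2 : X)) ((1 : ℝ), (0 : X)) :=
    ((hG.continuous_fderiv one_ne_zero).clm_apply continuous_const).comp (by fun_prop)
  have hcompact : IsCompact ((Metric.closedBall r 1 ×ˢ Set.univ : Set (ℝ × K))) :=
    (isCompact_closedBall r 1).prod isCompact_univ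
  obtain ⟨M, hM⟩ := hcompact.exists_bound_of_continuousOn hcont.continuousOn
  have hint : ∀ {f : K → F}, Continuous f → Integrable f μ := fun hf =>
    hf.integrable_of_hasCompactSupport (HasCompactSupport.of_compactSpace _)
  refine (hasDerivAt_integral_of_dominated_loc_of_deriv_le (bound := fun _ => M)
    (Metric.closedBall_mem_nhds r one_pos) (.of_forall fun s => ?_) (hint ?_) ?_
    (.of_forall fun w s hs => hM (s, w) ⟨hs, trivial⟩) (integrable_const M)
    (.of_forall fun w s _ => ?_)).2
  · exact (hint (hG.continuous.comp (by fun_prop))).aestronglyMeasurable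
  · exact hG.continuous.comp (by fun_prop)
  · exact (hint (hcont.comp (by fun_prop : Continuous fun w : K => (r, w)))).aestronglyMeasurable
  · exact (hG.differentiable one_ne_zero _).hasFDerivAt.comp_hasDerivAt s
      ((hasDerivAt_id s).prodMk (hasDerivAt_const s (w : X)))

lemma contDiff_integral_of_contDiff (hG : ContDiff ℝ ∞ G) :
    ContDiff ℝ ∞ fun r => ∫ w : K, G (r, w) ∂μ := by
  refine contDiff_infty.2 fun k => ?_
  have hderiv : ∀ {G : ℝ × X → F}, ContDiff ℝ ∞ G → ∀ r, HasDerivAt _ _ r := fun hG =>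
    hasDerivAt_integral_of_contDiff μ (hG.of_le ENat.LEInfty.out)
  induction k generalizing G with
  | zero =>
    exact contDiff_zero.2 (continuous_iff_continuousAt.2 fun r => (hderiv hG r).continuousAt)
  | succ k ih =>
    rw [Nat.cast_succ, contDiff_succ_iff_deriv]
    refine ⟨fun r => (hderiv hG r).differentiableAt, by simp, ?_⟩
    rw [funext fun r => (hderiv hG r).deriv]
    exact ih ((hG.fderiv_right (m := ∞) (by simp)).clm_apply contDiff_const)

end ParametricIntegral

/-! ### Intertwining operators -/

section Separation

variable {n d : ℕ} {P : EuclideanSpace ℝ (Fin n) → ℂ} {f g : ℝ → ℂ} {r : ℝ}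
  {ψ : EuclideanSpace ℝ (Fin n) → ℂ}

local notation "E" => EuclideanSpace ℝ (Fin n)
local notation "𝕊" => Metric.sphere (0 : EuclideanSpace ℝ (Fin n)) 1

/-- The surface measure of the unit sphere of `ℝⁿ`. -/
abbrev sphereMeasure (n : ℕ) : Measure (Metric.sphere (0 : EuclideanSpace ℝ (Fin n)) 1) :=
  (volume : Measure (EuclideanSpace ℝ (Fin n))).toSphere

/-- The square of the `L²` norm of `P` on the unit sphere of `ℝⁿ`, as a complex number: the factor
by which `sepFun n d P` scales inner products. -/
def sphereNormSq (n : ℕ) (P : EuclideanSpace ℝ (Fin n) → ℂ) : ℂ :=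
  ∫ w, conj (P w) * P w ∂sphereMeasure n

/-- The radial coefficient `r ^ ((n - 1) / 2) ∫ conj P(ω) ψ(rω) dω` of `ψ`; the operator
`ψ ↦ sepProj n P ψ` is the formal adjoint of `f ↦ sepFun n d P f`. It is set to `0` for `r ≤ 0`. -/
def sepProj (n : ℕ) (P ψ : EuclideanSpace ℝ (Fin n) → ℂ) (r : ℝ) : ℂ :=
  if 0 < r then ((r ^ (((n : ℝ) - 1) / 2) : ℝ) : ℂ) *
    ∫ w, conj (P w) * ψ (r • (w : EuclideanSpace ℝ (Fin n))) ∂sphereMeasure n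
  else 0

lemma sepFun_smul_sphere (hP : IsHomog d P) (f : ℝ → ℂ) (w : 𝕊) (hr : 0 < r) :
    sepFun n d P f (r • (w : E)) = ((r ^ (-(((n : ℝ) - 1) / 2)) : ℝ) : ℂ) * f r * P w := by
  have hr0 : (r : ℂ) ≠ 0 := Complex.ofReal_ne_zero.2 hr.ne'
  rw [sepFun, norm_smul_sphere w hr, hP.map_smul, neg_add, Real.rpow_add hr,
    Real.rpow_neg hr.le (d : ℝ), Real.rpow_natCast]
  push_cast
  field_simp

lemma sepProj_sepFun (hP : IsHomog d P) (g : ℝ → ℂ) (hr : 0 < r) :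
    sepProj n P (sepFun n d P g) r = sphereNormSq n P * g r := by
  have hrpow := ofReal_rpow_mul_rpow_neg hr (((n : ℝ) - 1) / 2)
  have hpolar : ∀ w : 𝕊, conj (P w) * sepFun n d P g (r • (w : E)) =
      ((r ^ (-(((n : ℝ) - 1) / 2)) : ℝ) : ℂ) * g r * (conj (P w) * P w) := fun w => by
    rw [sepFun_smul_sphere hP g w hr]
    ring
  rw [sepProj, if_pos hr]
  simp only [hpolar]
  rw [integral_const_mul, ← sphereNormSq]
  linear_combination sphereNormSq n P * g r * hrpow

lemma isTest_sepProj (hP : ContDiff ℝ ∞ P) (hψ : IsTest {0}ᶜ ψ) :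
    IsTest (Set.Ioi 0) (sepProj n P ψ) := by
  refine .of_support_subset (hψ.hasCompactSupport.image continuous_norm) ?_ (fun r hr => ?_)
    fun r hr => ?_
  · rintro _ ⟨x, hx, rfl⟩
    exact norm_pos_iff.2 (hψ.tsupport_subset hx)
  · by_contra hnorm
    have hzero : 0 < r → ∀ w : 𝕊, ψ (r • (w : E)) = 0 := fun hr0 w =>
      by_contra fun hw => hnorm ⟨_, subset_tsupport _ hw, norm_smul_sphere w hr0⟩
    exact hr (by simp +contextual [sepProj, hzero])
  · have hG : ContDiff ℝ ∞ fun q : ℝ × E => conj (P q.2) * ψ (q.1 • q.2) :=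
      (Complex.conjCLE.contDiff.comp (hP.comp contDiff_snd)).mul
        (hψ.contDiff.comp (contDiff_fst.smul contDiff_snd))
    refine ((contDiffAt_ofReal_rpow (ne_of_gt hr) (((n : ℝ) - 1) / 2)).mul
      (contDiff_integral_of_contDiff (sphereMeasure n) hG).contDiffAt).congr_of_eventuallyEq ?_
    filter_upwards [lt_mem_nhds hr] with s hs using if_pos hs

lemma sphereNormSq_ne_zero (hP : Continuous P) (h : ∃ w : 𝕊, P w ≠ 0) : sphereNormSq n P ≠ 0 := by
  obtain ⟨w, hw⟩ := h
  have hnorm : ∀ w : 𝕊, conj (P w) * P w = ((‖P w‖ ^ 2 : ℝ) : ℂ) := fun w => by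
    rw [RCLike.conj_mul]
    norm_cast
  simp only [sphereNormSq, hnorm]
  rw [integral_complex_ofReal, Complex.ofReal_ne_zero]
  exact (Continuous.integral_pos_of_hasCompactSupport_nonneg_nonzero (x := w) (by fun_prop)
    (HasCompactSupport.of_compactSpace _) (fun w => by positivity) (by simpa using hw)).ne'

lemma laplacian_pow_clm (L : E →L[ℝ] ℂ) (m : ℕ) (x : E) :
    laplacian (fun y => L y ^ m) x =
      m * ((m - 1 : ℕ) * L x ^ (m - 1 - 1)) * ∑ i, L (EuclideanSpace.single i (1 : ℝ)) ^ 2 := by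
  have hfderiv : ∀ (m : ℕ) (y v : E), fderiv ℝ (fun y => L y ^ m) y v = L v * m * L y ^ (m - 1) :=
    fun m y v => by
      rw [(L.hasFDerivAt.pow m).fderiv]
      simp only [smul_apply, smul_eq_mul, nsmul_eq_mul]
      ring
  simp only [laplacian, hfderiv, Finset.mul_sum]
  refine Finset.sum_congr rfl fun i _ => ?_
  rw [fderiv_const_mul (L.differentiable.fun_pow (m - 1) x), smul_apply, hfderiv, smul_eq_mul]
  ring

lemma isSolidHarmonic_pow_clm {L : E →L[ℝ] ℂ}
    (hL : ∑ i, L (EuclideanSpace.single i (1 : ℝ)) ^ 2 = 0) (m : ℕ) :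
    IsSolidHarmonic m fun x => L x ^ m where
  contDiff := L.contDiff.pow m
  map_smul t x := by rw [map_smul, Complex.real_smul, mul_pow]
  laplacian_eq_zero x := by rw [laplacian_pow_clm, hL, mul_zero]

lemma exists_isSolidHarmonic_sphereNormSq_ne_zero [n.AtLeastTwo] (m : ℕ) :
    ∃ P : E → ℂ, IsSolidHarmonic m P ∧ sphereNormSq n P ≠ 0 := by
  have hn : 2 ≤ n := Nat.AtLeastTwo.prop
  let i₀ : Fin n := ⟨0, by lia⟩
  let i₁ : Fin n := ⟨1, by lia⟩
  have hne : i₀ ≠ i₁ := by simp [i₀, i₁]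
  let L : E →L[ℝ] ℂ := Complex.ofRealCLM.comp (EuclideanSpace.proj (𝕜 := ℝ) i₀) +
    Complex.I • Complex.ofRealCLM.comp (EuclideanSpace.proj (𝕜 := ℝ) i₁)
  have hL : ∀ x, L x = x i₀ + Complex.I * x i₁ := fun x => by simp [L]
  have hsum : ∑ i, L (EuclideanSpace.single i (1 : ℝ)) ^ 2 = 0 := by
    rw [Finset.sum_eq_add i₀ i₁ hne (fun i _ hi => by simp [hL, hi.1.symm, hi.2.symm])
      (by simp) (by simp)]
    simp [hL, hne, hne.symm]
  have hP := isSolidHarmonic_pow_clm hsum m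
  refine ⟨_, hP, sphereNormSq_ne_zero hP.contDiff.continuous
    ⟨⟨EuclideanSpace.single i₀ 1, by simp⟩, ?_⟩⟩
  simp [hL, hne]

variable [NeZero n]

lemma pow_mul_rpow_neg_half (hr : 0 < r) :
    r ^ (n - 1) * r ^ (-(((n : ℝ) - 1) / 2)) = r ^ (((n : ℝ) - 1) / 2) := by
  rw [← Real.rpow_natCast, ← Real.rpow_add hr, Nat.cast_pred (NeZero.pos n)]
  ring_nf

lemma sepFun_congr (d : ℕ) (P : E → ℂ) (h : f =ᵐ[lebIoi] g) :
    sepFun n d P f =ᵐ[volume] sepFun n d P g := by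
  filter_upwards [(quasiMeasurePreserving_norm volume).ae_eq_comp h] with x hx
  simp only [Function.comp_apply] at hx
  simp only [sepFun, hx]

lemma aestronglyMeasurable_sepFun (hP : Continuous P) (hf : AEStronglyMeasurable f lebIoi) :
    AEStronglyMeasurable (sepFun n d P f) volume :=
  ((Complex.measurable_ofReal.comp (measurable_norm.pow_const _)).aestronglyMeasurable.mul
    (hf.comp_quasiMeasurePreserving (quasiMeasurePreserving_norm volume))).mul
    hP.aestronglyMeasurable

lemma memLp_sepFun (hP : IsHomog d P) (hf : MemLp f 2 lebIoi) :
    MemLp (sepFun n d P f) 2 volume := by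
  have hmeas := aestronglyMeasurable_sepFun (d := d) hP.contDiff.continuous hf.1
  have hpolar := measurePreserving_smul_sphere (volume : Measure E)
  rw [finrank_euclideanSpace_fin] at hpolar
  refine (memLp_two_iff_integrable_sq_norm hmeas).2
    ((hpolar.integrable_comp (hmeas.norm.pow 2)).1 ?_)
  have hP2 : Integrable (fun w : 𝕊 => ‖P w‖ ^ 2) (sphereMeasure n) := by
    have hPc := hP.contDiff.continuous
    exact Continuous.integrable_of_hasCompactSupport (by fun_prop) (.of_compactSpace _)
  have hf2 : Integrable (fun r : ℝ => (r ^ (-(((n : ℝ) - 1) / 2)) * ‖f r‖) ^ 2)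
      (radialMeasure (n - 1)) := by
    rw [integrable_radialMeasure_iff]
    refine ((memLp_two_iff_integrable_sq_norm hf.1).1 hf).congr ?_
    filter_upwards [ae_lebIoi_pos] with r hr
    have hrpow : r ^ (((n : ℝ) - 1) / 2) * r ^ (-(((n : ℝ) - 1) / 2)) = 1 := by
      rw [← Real.rpow_add hr, add_neg_cancel, Real.rpow_zero]
    rw [smul_eq_mul, mul_pow, sq (r ^ (-(((n : ℝ) - 1) / 2))), ← mul_assoc, ← mul_assoc,
      pow_mul_rpow_neg_half hr, hrpow, one_mul]
  refine (hP2.mul_prod hf2).congr ?_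
  filter_upwards [ae_prod_radialMeasure_pos _ _] with p hp
  rw [Function.comp_apply, Pi.pow_apply, sepFun_smul_sphere hP f p.1 hp, norm_mul, norm_mul,
    Complex.norm_of_nonneg (by positivity)]
  ring

lemma integral_sepFun_mul (hP : IsHomog d P) (hf : MemLp f 2 lebIoi) (hψ : MemLp ψ 2 volume) :
    ∫ x, conj (sepFun n d P f x) * ψ x = ∫ r, conj (f r) * sepProj n P ψ r ∂lebIoi := by
  have hint : Integrable fun x => conj (sepFun n d P f x) * ψ x :=
    (memLp_sepFun hP hf).star.integrable_mul hψ
  rw [integral_eq_integral_sphere hint, finrank_euclideanSpace_fin]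
  refine integral_congr_ae ?_
  filter_upwards [ae_lebIoi_pos] with r hr
  have hpolar : ∀ w : 𝕊, conj (sepFun n d P f (r • (w : E))) * ψ (r • (w : E)) =
      ((r ^ (-(((n : ℝ) - 1) / 2)) : ℝ) : ℂ) * conj (f r) * (conj (P w) * ψ (r • (w : E))) :=
    fun w => by
      rw [sepFun_smul_sphere hP f w hr]
      simp only [map_mul, Complex.conj_ofReal]
      ring
  simp only [hpolar]
  rw [integral_const_mul, sepProj, if_pos hr, ← pow_mul_rpow_neg_half hr, Complex.real_smul]
  push_cast
  ring

lemma integral_sepFun_mul_sepFun (hP : IsHomog d P) (hf : MemLp f 2 lebIoi)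
    (hg : MemLp g 2 lebIoi) :
    ∫ x, conj (sepFun n d P f x) * sepFun n d P g x =
      sphereNormSq n P * ∫ r, conj (f r) * g r ∂lebIoi := by
  rw [integral_sepFun_mul hP hf (memLp_sepFun hP hg), ← integral_const_mul]
  refine integral_congr_ae ?_
  filter_upwards [ae_lebIoi_pos] with r hr
  rw [sepProj_sepFun hP g hr]
  ring

/-- The map `f ↦ sepFun n d P f` as a linear map between `L²` spaces. -/
def sepLM (hP : IsHomog d P) : Lp ℂ 2 lebIoi →ₗ[ℂ] Lp ℂ 2 (volume : Measure E) where
  toFun f := (memLp_sepFun hP (Lp.memLp f)).toLp _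
  map_add' f g := by
    rw [← MemLp.toLp_add, MemLp.toLp_eq_toLp_iff]
    refine (sepFun_congr d P (Lp.coeFn_add f g)).trans (.of_forall fun x => ?_)
    simp only [sepFun, Pi.add_apply]
    ring
  map_smul' a f := by
    rw [RingHom.id_apply, ← MemLp.toLp_const_smul, MemLp.toLp_eq_toLp_iff]
    refine (sepFun_congr d P (Lp.coeFn_smul a f)).trans (.of_forall fun x => ?_)
    simp only [sepFun, Pi.smul_apply, smul_eq_mul]
    ring

lemma sepLM_ae_eq (hP : IsHomog d P) (f : Lp ℂ 2 lebIoi) :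
    sepLM hP f =ᵐ[volume] sepFun n d P f :=
  MemLp.coeFn_toLp (memLp_sepFun hP (Lp.memLp f))

lemma inner_sepLM (hP : IsHomog d P) (f g : Lp ℂ 2 lebIoi) :
    inner ℂ (sepLM hP f) (sepLM hP g) = sphereNormSq n P * inner ℂ f g := by
  rw [inner_eq_integral_of_ae_eq (sepLM_ae_eq hP f) (sepLM_ae_eq hP g),
    integral_sepFun_mul_sepFun hP (Lp.memLp f) (Lp.memLp g),
    inner_eq_integral_of_ae_eq (.refl _ _) (.refl _ _)]

/-- The map `f ↦ sepFun n d P f` as a bounded operator from `L²((0, ∞); dr)` to `L²(ℝⁿ)`. -/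
def sepCLM (hP : IsHomog d P) : Lp ℂ 2 lebIoi →L[ℂ] Lp ℂ 2 (volume : Measure E) :=
  (sepLM hP).mkContinuous (Real.sqrt ‖sphereNormSq n P‖) fun f => by
    refine (sq_le_sq₀ (norm_nonneg _) (by positivity)).1 (le_of_eq ?_)
    rw [mul_pow, Real.sq_sqrt (norm_nonneg _)]
    simpa [inner_self_eq_norm_sq_to_K] using congrArg norm (inner_sepLM hP f f)

lemma inner_sepCLM (hP : IsHomog d P) (f g : Lp ℂ 2 lebIoi) :
    inner ℂ (sepCLM hP f) (sepCLM hP g) = sphereNormSq n P * inner ℂ f g :=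
  inner_sepLM hP f g

lemma sepCLM_ae_eq (hP : IsHomog d P) {p : Lp ℂ 2 lebIoi} (hp : p =ᵐ[lebIoi] f) :
    sepCLM hP p =ᵐ[volume] sepFun n d P f :=
  (sepLM_ae_eq hP p).trans (sepFun_congr d P hp)

lemma adjoint_sepCLM_ae_eq (hP : IsHomog d P) (hψ : IsTest {0}ᶜ ψ)
    {q : Lp ℂ 2 (volume : Measure E)} (hq : q =ᵐ[volume] ψ) :
    (sepCLM hP).adjoint q =ᵐ[lebIoi] sepProj n P ψ := by
  have hproj : MemLp (sepProj n P ψ) 2 lebIoi := (isTest_sepProj hP.contDiff hψ).memLp lebIoi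
  have hadj : (sepCLM hP).adjoint q = hproj.toLp := by
    refine ext_inner_left ℂ fun f => ?_
    rw [ContinuousLinearMap.adjoint_inner_right,
      inner_eq_integral_of_ae_eq (sepCLM_ae_eq hP (.refl _ _)) hq,
      inner_eq_integral_of_ae_eq (.refl _ _) hproj.coeFn_toLp,
      integral_sepFun_mul hP (Lp.memLp f) (hψ.memLp volume)]
  rw [hadj]
  exact hproj.coeFn_toLp

end Separation

/-! ### Reduction to the half line -/

section Reduction

variable {n : ℕ}

lemma graphOf_eq_testGraph
    (L : (EuclideanSpace ℝ (Fin n) → ℂ) → EuclideanSpace ℝ (Fin n) → ℂ) :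
    graphOf n L = testGraph volume {0}ᶜ L := by
  have hiff : ∀ φ, IsTest {(0 : EuclideanSpace ℝ (Fin n))}ᶜ φ ↔
      ContDiff ℝ ∞ φ ∧ HasCompactSupport φ ∧ 0 ∉ tsupport φ := fun φ =>
    ⟨fun ⟨h1, h2, h3⟩ => ⟨h1, h2, Set.subset_compl_singleton_iff.1 h3⟩,
      fun ⟨h1, h2, h3⟩ => ⟨h1, h2, Set.subset_compl_singleton_iff.2 h3⟩⟩
  simp only [graphOf, testGraph, hiff, and_assoc]

lemma graphOnHalfLine_eq_testGraph (L : (ℝ → ℂ) → ℝ → ℂ) :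
    graphOnHalfLine L = testGraph lebIoi (Set.Ioi 0) L := by
  have hiff : ∀ φ : ℝ → ℂ, IsTest (Set.Ioi 0) φ ↔
      ContDiff ℝ ∞ φ ∧ HasCompactSupport φ ∧ tsupport φ ⊆ Set.Ioi 0 := fun φ =>
    ⟨fun ⟨h1, h2, h3⟩ => ⟨h1, h2, h3⟩, fun ⟨h1, h2, h3⟩ => ⟨h1, h2, h3⟩⟩
  simp only [graphOnHalfLine, testGraph, hiff, and_assoc]

/-- The graph of `Δ² + c|x|⁻⁴` on `C₀^∞(ℝⁿ∖{0})`. -/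
abbrev bilaplacianGraph (n : ℕ) (c : ℝ) :=
  testGraph (volume : Measure (EuclideanSpace ℝ (Fin n))) {0}ᶜ (bilaplacianExp n c)

/-- The graph of `τ_{2,n,ℓ}(c)` on `C₀^∞((0,∞))`. -/
abbrev tau2nlGraph (n ℓ : ℕ) (c : ℝ) :=
  testGraph lebIoi (Set.Ioi 0) (tau2nlExp n ℓ c)

lemma T2op_eq_toLinearPMap (c : ℝ) : T2op n c = (bilaplacianGraph n c).toLinearPMap :=
  congrArg Submodule.toLinearPMap (graphOf_eq_testGraph _)

lemma tau2nlOp_eq_toLinearPMap (ℓ : ℕ) (c : ℝ) :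
    tau2nlOp n ℓ c = (tau2nlGraph n ℓ c).toLinearPMap :=
  congrArg Submodule.toLinearPMap (graphOnHalfLine_eq_testGraph _)

lemma isSymmetricGraph_bilaplacianGraph [NeZero n] (c : ℝ) :
    IsSymmetricGraph (bilaplacianGraph n c) :=
  isSymmetricGraph_testGraph isOpen_compl_singleton (compl_mem_ae_iff.2 (measure_singleton 0))
    (fun _ hφ => hφ.bilaplacianExp c) fun _ _ => integral_bilaplacianExp_mul c

lemma intertwines_sepCLM [NeZero n] {d : ℕ} {P : EuclideanSpace ℝ (Fin n) → ℂ}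
    (hP : IsSolidHarmonic d P) (c : ℝ) :
    Intertwines (sepCLM hP.toIsHomog) (tau2nlGraph n d c) (bilaplacianGraph n c) := by
  refine intertwines_span fun p hp => ?_
  obtain ⟨φ, hφ, hp1, hp2⟩ := hp
  refine Submodule.subset_span ⟨_, isTest_sepFun hφ hP.contDiff, sepCLM_ae_eq _ hp1, ?_⟩
  rw [bilaplacianExp_sepFun c hP hφ]
  exact sepCLM_ae_eq _ hp2

/-- Symmetry is inherited from `Δ² + c|x|⁻⁴` through the multiple `sepCLM` of an isometry, which
avoids integrating by parts on the half line. -/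
lemma isSymmetricGraph_tau2nlGraph [n.AtLeastTwo] (ℓ : ℕ) (c : ℝ) :
    IsSymmetricGraph (tau2nlGraph n ℓ c) := by
  obtain ⟨P, hP, hP0⟩ := exists_isSolidHarmonic_sphereNormSq_ne_zero (n := n) ℓ
  exact .of_intertwines hP0 (inner_sepCLM hP.toIsHomog) (isSymmetricGraph_bilaplacianGraph c)
    (dense_map_fst_testGraph isOpen_Ioi ae_lebIoi_pos fun _ hφ => hφ.tau2nlExp n ℓ c)
    (intertwines_sepCLM hP c)

lemma intertwines_adjoint_sepCLM [n.AtLeastTwo] {d : ℕ} {P : EuclideanSpace ℝ (Fin n) → ℂ}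
    (hP : IsSolidHarmonic d P) (c : ℝ) :
    Intertwines (sepCLM hP.toIsHomog).adjoint (bilaplacianGraph n c) (tau2nlGraph n d c) :=
  (intertwines_sepCLM hP c).adjoint_of_mem_domain (isSymmetricGraph_bilaplacianGraph c)
    (isSymmetricGraph_tau2nlGraph d c) fun _ hp =>
      mem_of_mem_testGraph (sepCLM hP.toIsHomog).adjoint.toLinearMap _ (fun _ _ hψ hq =>
        mem_map_fst_testGraph (fun _ hφ => hφ.tau2nlExp n d c) (isTest_sepProj hP.contDiff hψ)
          (adjoint_sepCLM_ae_eq hP.toIsHomog hψ hq)) hp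

lemma injective_sepCLM [NeZero n] {d : ℕ} {P : EuclideanSpace ℝ (Fin n) → ℂ}
    (hP : IsHomog d P) (hP0 : sphereNormSq n P ≠ 0) : Function.Injective (sepCLM hP) := by
  refine (injective_iff_map_eq_zero _).2 fun y hy => ?_
  have hinner := inner_sepCLM hP y y
  rw [hy, inner_zero_left, zero_eq_mul] at hinner
  exact inner_self_eq_zero.1 (hinner.resolve_left hP0)

lemma eq_zero_of_forall_adjoint_sepCLM_eq_zero [NeZero n]
    (y : Lp ℂ 2 (volume : Measure (EuclideanSpace ℝ (Fin n))))
    (h : ∀ d P, ∀ hP : IsSolidHarmonic d P, (sepCLM hP.toIsHomog).adjoint y = 0) : y = 0 := by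
  refine Lp_eq_zero_of_forall_isSolidHarmonic (NeZero.pos n) y fun d P hP κ hκ => ?_
  obtain ⟨f, hf, hfκ⟩ := exists_isTest_sepFun_eq (n := n) hκ d P
  have hfL := (hf.memLp lebIoi).coeFn_toLp
  have hinner := (sepCLM hP.toIsHomog).adjoint_inner_left (hf.memLp lebIoi).toLp y
  rwa [h d P hP, inner_zero_left, inner_eq_integral_of_ae_eq (.refl _ _) (sepCLM_ae_eq _ hfL),
    hfκ, eq_comm] at hinner

end Reduction

theorem stmt8 (n : ℕ) (hn : 2 ≤ n) (c : ℝ) :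
    EssentiallySelfAdjoint (T2op n c) ↔
      ∀ ℓ : ℕ, EssentiallySelfAdjoint (tau2nlOp n ℓ c) := by
  have : n.AtLeastTwo := ⟨hn⟩
  have hT := isSymmetricGraph_bilaplacianGraph (n := n) c
  have hτ := fun ℓ => isSymmetricGraph_tau2nlGraph (n := n) ℓ c
  simp only [T2op_eq_toLinearPMap, tau2nlOp_eq_toLinearPMap]
  constructor
  · intro h ℓ
    obtain ⟨P, hP, hP0⟩ := exists_isSolidHarmonic_sphereNormSq_ne_zero (n := n) ℓ
    refine (hτ ℓ).essentiallySelfAdjoint_of_intertwines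
      (fun _ : Unit => (sepCLM hP.toIsHomog).adjoint) (fun _ => hT)
      (fun _ => intertwines_adjoint_sepCLM hP c) (fun y hy => ?_) fun _ => h
    rw [ContinuousLinearMap.adjoint_adjoint] at hy
    exact (injective_iff_map_eq_zero _).1 (injective_sepCLM _ hP0) y (hy ())
  · intro h
    exact hT.essentiallySelfAdjoint_of_intertwines
      (fun i : Σ d, {P : EuclideanSpace ℝ (Fin n) → ℂ // IsSolidHarmonic d P} =>
        sepCLM i.2.2.toIsHomog) (fun i => hτ i.1) (fun i => intertwines_sepCLM i.2.2 c)
      (fun y hy => eq_zero_of_forall_adjoint_sepCLM_eq_zero y fun d P hP => hy ⟨d, P, hP⟩)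
      fun i => h i.1
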